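/- arXiv:math/9905083 — 2 statements merged into one kernel-verified Lean document; each statement's English description precedes it below -/
import Mathlib

section
/- Let f and g be polynomials with complex coefficients, with coefficient sequences (f_a) and (g_a) (set to 0 for indices outside the degree range). Then for every positive integer l, E_{U∈U(l)} det(f(U)) · det(g(U*)) = det_{0≤j,k<l} ( Σ_{a≥0} f_a · g_{a+j−k} ), where U* is the conjugate transpose of U, f(U) and g(U*) denote evaluation of the polynomials at the matrices U and U*, and the right-hand side is the determinant of the l×l Toeplitz matrix with (j,k) entry Σ_{a≥0} f_a g_{a+j−k} (interpreting g at a negative index as 0). -/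
open MeasureTheory Matrix

noncomputable section

instance (l : ℕ) : MeasurableSpace (Matrix.unitaryGroup (Fin l) ℂ) := borel _
instance (l : ℕ) : BorelSpace (Matrix.unitaryGroup (Fin l) ℂ) := ⟨rfl⟩

/-- The coefficient of a polynomial at an integer index (zero at negative indices). -/
def coeffZ (g : Polynomial ℂ) (m : ℤ) : ℂ :=
  if 0 ≤ m then g.coeff m.toNat else 0

/-!
Since `U* = U⁻¹`, the determinant of `g(U*)` is `star (det U) ^ N` times that of the reverse of `g`
at `U`, where `N` is the degree of `g`. Polarising the determinant to the mixed discriminant of `l`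
matrices and expanding by multilinearity reduces the theorem to monomials: the Haar expectation of
`star (det U) ^ N` times the mixed discriminant of the powers `U ^ m k` is the mixed discriminant of
the shift matrices with exponents `m k - N`.

Both sides, as functions of the exponents `m`, are symmetric, take the value `l!` at the constant
exponent `N`, and satisfy the same loop (Schwinger–Dyson) equations. For the Haar expectation these
express the invariance of the measure under infinitesimal left translations, summed over the matrix
units. The mixed discriminant of shift matrices is the integral of `∏ j, z_j ^ (m j - N)` over a
torus with the Weyl density, where the loop equations express that an Euler derivative of a Laurent
polynomial has vanishing constant term. The equations determine the function: applied at an extreme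
exponent, they express its value through values at exponents with a smaller sum of squares.
-/

section MixedDiscriminant

open Equiv Function

theorem mul_eq_sum_vecMulVec {l m n R : Type*} [Fintype m] [NonUnitalNonAssocSemiring R]
    (P : Matrix l m R) (Q : Matrix m n R) : P * Q = ∑ a, vecMulVec (P.col a) (Q a) := by
  ext p q
  simp [mul_apply, Matrix.sum_apply, vecMulVec_apply]

variable {n R : Type*} [Fintype n] [DecidableEq n] [CommRing R]

/-- The mixed discriminant of a family of matrices, that is, the full polarisation of the
determinant. It is not divided by `n!`, so it makes sense over any commutative ring. -/
def mixedDet : MultilinearMap R (fun _ : n => Matrix n n R) R :=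
  ∑ τ : Perm n, (detRowAlternating.toMultilinearMap.compLinearMap fun q =>
    LinearMap.proj q ∘ₗ (transposeLinearEquiv n n R R).toLinearMap).domDomCongr τ

theorem mixedDet_apply (A : n → Matrix n n R) :
    mixedDet A = ∑ τ : Perm n, det (of fun q => (A (τ q)).col q) := by
  simp only [mixedDet, _root_.sum_apply]
  rfl

theorem mixedDet_const (A : Matrix n n R) :
    mixedDet (fun _ => A) = ((Fintype.card n).factorial : R) * A.det := by
  rw [mixedDet_apply, ← det_transpose A]
  simp only [Finset.sum_const, Finset.card_univ, Fintype.card_perm, nsmul_eq_mul]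
  rfl

theorem mixedDet_comp_perm (A : n → Matrix n n R) (π : Perm n) :
    mixedDet (fun k => A (π k)) = mixedDet A := by
  simp only [mixedDet_apply]
  exact Equiv.sum_comp (Equiv.mulLeft π) fun τ : Perm n => det (of fun q => (A (τ q)).col q)

theorem mixedDet_eq_sum_sum_sign (A : n → Matrix n n R) :
    mixedDet A = ∑ σ : Perm n, ∑ τ : Perm n,
      (Perm.sign σ : R) * (Perm.sign τ : R) * ∏ k, A k (σ k) (τ k) := by
  have hdet (τ : Perm n) : det (of fun q => (A (τ q)).col q) = ∑ σ : Perm n,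
      (Perm.sign σ : R) * (Perm.sign τ⁻¹ : R) * ∏ k, A k (σ k) (τ⁻¹ k) := by
    rw [← det_transpose, det_apply', ← Equiv.sum_comp (Equiv.mulRight τ)]
    refine Finset.sum_congr rfl fun σ _ => ?_
    rw [← Equiv.prod_comp τ fun k => A k (σ k) (τ⁻¹ k)]
    simp
  rw [mixedDet_apply, Finset.sum_comm, ← Equiv.sum_comp (Equiv.inv (Perm n))]
  simp [hdet]

theorem sum_det_updateRow_mulVec (M N : Matrix n n R) :
    ∑ q, det (N.updateRow q (M *ᵥ N q)) = M.trace * N.det := by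
  calc ∑ q, det (N.updateRow q (M *ᵥ N q)) = trace (adjugate Nᵀ * M * Nᵀ) :=
        Finset.sum_congr rfl fun q _ => by
          rw [← cramer_transpose_apply, cramer_eq_adjugate_mulVec, mulVec_mulVec]
          rfl
    _ = M.trace * N.det := by
        rw [mul_assoc, trace_mul_comm, mul_assoc, mul_adjugate, det_transpose, Matrix.mul_smul,
          Matrix.mul_one, trace_smul, smul_eq_mul, mul_comm]

theorem sum_mixedDet_update_mul (A : n → Matrix n n R) (M : Matrix n n R) :
    ∑ k, mixedDet (update A k (M * A k)) = M.trace * mixedDet A := by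
  simp only [mixedDet_apply]
  rw [Finset.sum_comm, Finset.mul_sum]
  refine Finset.sum_congr rfl fun τ _ => ?_
  rw [← sum_det_updateRow_mulVec, ← Equiv.sum_comp τ]
  refine Finset.sum_congr rfl fun q _ => congrArg det ?_
  ext q' p
  rcases eq_or_ne q' q with rfl | h
  · simp [mul_apply, mulVec, dotProduct]
  · simp [h]

theorem det_updateRow_updateRow_swap (N : Matrix n n R) {p q : n} (hpq : p ≠ q) (u v : n → R) :
    det ((N.updateRow p u).updateRow q v) = -det ((N.updateRow p v).updateRow q u) := by
  have rows : (N.updateRow p u).updateRow q v =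
      ((N.updateRow p v).updateRow q u).submatrix (swap p q) id := by
    ext k c
    rcases eq_or_ne k p with rfl | hp
    · simp [updateRow_apply, hpq]
    · rcases eq_or_ne k q with rfl | hq
      · simp [updateRow_apply, hpq]
      · simp [updateRow_apply, swap_apply_of_ne_of_ne, hp, hq]
  rw [rows, det_permute, Perm.sign_swap hpq]
  simp

theorem mixedDet_update_vecMulVec_swap (A : n → Matrix n n R) {i j : n} (hij : i ≠ j)
    (u v x y : n → R) :
    mixedDet (update (update A i (vecMulVec u x)) j (vecMulVec v y)) =
      -mixedDet (update (update A i (vecMulVec v x)) j (vecMulVec u y)) := by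
  simp only [mixedDet_apply, ← Finset.sum_neg_distrib]
  refine Finset.sum_congr rfl fun τ _ => ?_
  have rows (u v : n → R) :
      of (fun q => (update (update A i (vecMulVec u x)) j (vecMulVec v y) (τ q)).col q) =
        ((of fun q => (A (τ q)).col q).updateRow (τ.symm i) (x (τ.symm i) • u)).updateRow
          (τ.symm j) (y (τ.symm j) • v) := by
    ext q p
    obtain ⟨k, rfl⟩ := τ.symm.surjective q
    rcases eq_or_ne k j with rfl | hj
    · simp [vecMulVec_apply, mul_comm]
    · rcases eq_or_ne k i with rfl | hi <;> simp [vecMulVec_apply, mul_comm, *]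
  have hne : τ.symm i ≠ τ.symm j := τ.symm.injective.ne hij
  rw [rows, rows, det_updateRow_smul, det_updateRow_smul, updateRow_comm _ hne,
    updateRow_comm _ hne, det_updateRow_smul, det_updateRow_smul,
    det_updateRow_updateRow_swap _ hne.symm]
  ring

theorem single_mul_eq_vecMulVec (a b : n) (P : Matrix n n R) :
    single b a 1 * P = vecMulVec ((1 : Matrix n n R).col b) (P a) := by
  rw [single_eq_single_vecMulVec_single, vecMulVec_mul, single_one_vecMul, ← mulVec_single_one,
    one_mulVec]
  rfl

theorem sum_mixedDet_update_single (A : n → Matrix n n R) {i j : n} (hij : i ≠ j)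
    (P Q S : Matrix n n R) :
    ∑ a, ∑ b, mixedDet (update (update A i (single b a 1 * P)) j (Q * single a b 1 * S)) =
      -mixedDet (update (update A i (Q * P)) j S) := by
  have swapped (a b : n) :
      mixedDet (update (update A i (single b a 1 * P)) j (Q * single a b 1 * S)) =
        -mixedDet (update (update A i (vecMulVec (Q.col a) (P a))) j
          (vecMulVec ((1 : Matrix n n R).col b) (S b))) := by
    rw [mul_assoc, single_mul_eq_vecMulVec, single_mul_eq_vecMulVec, mul_vecMulVec,
      mixedDet_update_vecMulVec_swap A hij,
      show Q *ᵥ (1 : Matrix n n R).col a = Q.col a from congrArg (col · a) (mul_one Q)]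
  simp only [swapped, Finset.sum_neg_distrib, ← mixedDet.map_update_sum, ← mul_eq_sum_vecMulVec]
  simp only [one_mul, update_comm hij, ← mixedDet.map_update_sum, ← mul_eq_sum_vecMulVec]

theorem factorial_mul_det_sum_smul {α : Type*} (s : Finset α) (c : α → R) (A : α → Matrix n n R) :
    ((Fintype.card n).factorial : R) * (∑ a ∈ s, c a • A a).det =
      ∑ p ∈ Fintype.piFinset fun _ : n => s, (∏ k, c (p k)) * mixedDet fun k => A (p k) := by
  simp [← mixedDet_const, MultilinearMap.map_sum_finset, MultilinearMap.map_smul_univ]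

end MixedDiscriminant

section LoopEquations

open Equiv Finset Function

variable {ι : Type*} [DecidableEq ι]

/-- The exponents obtained from `m` by setting the `i`-th one to `c` and adjusting the `k`-th one
so that the total is preserved. For `c > m i + m k` the subtraction truncates; such `c` are not
used. -/
def transferExponent (m : ι → ℕ) (i k : ι) (c : ℕ) : ι → ℕ :=
  update (update m i c) k (m i + m k - c)

theorem transferExponent_self_left (m : ι → ℕ) (i k : ι) : transferExponent m i k (m i) = m := by
  simp [transferExponent]

theorem transferExponent_self_right (m : ι → ℕ) (i k : ι) :
    transferExponent m i k (m k) = m ∘ swap i k := by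
  rw [transferExponent, Nat.add_sub_cancel, Equiv.swap_comm, comp_swap_eq_update]

theorem comp_transferExponent {β : Type*} (f : ℕ → β) (m : ι → ℕ) (i k : ι) (c : ℕ) :
    f ∘ transferExponent m i k c = update (update (f ∘ m) i (f c)) k (f (m i + m k - c)) := by
  rw [transferExponent, comp_update, comp_update]

variable {R : Type*} [CommRing R]

theorem sum_transferExponent_sub_sum_of_forall_eq_zero {Z : (ι → ℕ) → R} {m : ι → ℕ} {i k : ι}
    (hswap : Z (m ∘ swap i k) = Z m)
    (hzero : ∀ c, min (m i) (m k) < c → c < max (m i) (m k) → Z (transferExponent m i k c) = 0) :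
    ∑ c ∈ Ioc 0 (m i), Z (transferExponent m i k c) -
        ∑ c ∈ Ioc 0 (m k), Z (transferExponent m i k c) =
      (Int.sign (m i - m k : ℤ) : R) * Z m := by
  rcases lt_trichotomy (m i) (m k) with h | h | h
  · rw [← sum_Ioc_consecutive _ (Nat.zero_le _) h.le, sub_add_cancel_left,
      sum_eq_single_of_mem (m k) (by simp [h]) fun c hc hne => ?_, transferExponent_self_right,
      hswap, Int.sign_eq_neg_one_of_neg (by omega)]
    · simp
    · rw [mem_Ioc] at hc
      exact hzero c (by omega) (by omega)
  · simp [h]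
  · rw [← sum_Ioc_consecutive _ (Nat.zero_le _) h.le, add_sub_cancel_left,
      sum_eq_single_of_mem (m i) (by simp [h]) fun c hc hne => ?_, transferExponent_self_left,
      Int.sign_eq_one_of_pos (by omega)]
    · simp
    · rw [mem_Ioc] at hc
      exact hzero c (by omega) (by omega)

variable [Fintype ι]

theorem sum_sq_transferExponent_lt (m : ι → ℕ) {i k : ι} (hik : i ≠ k) {c : ℕ}
    (hc : min (m i) (m k) < c) (hc' : c < max (m i) (m k)) :
    ∑ j, transferExponent m i k c j ^ 2 < ∑ j, m j ^ 2 := by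
  have split (f : ι → ℕ) : ∑ j, f j ^ 2 =
      f i ^ 2 + f k ^ 2 + ∑ j ∈ (univ.erase i).erase k, f j ^ 2 := by
    rw [← add_sum_erase _ _ (mem_univ i), ← add_sum_erase _ _ (mem_erase.2 ⟨hik.symm, mem_univ k⟩),
      add_assoc]
  have rest : ∑ j ∈ (univ.erase i).erase k, transferExponent m i k c j ^ 2 =
      ∑ j ∈ (univ.erase i).erase k, m j ^ 2 :=
    sum_congr rfl fun j hj => by simp_all [transferExponent]
  rw [split, split m, rest, add_lt_add_iff_right]
  simp only [transferExponent, update_self, update_of_ne hik]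
  have hle : c ≤ m i + m k := by omega
  zify [hle]
  have hlt : (0 : ℤ) < (c - min (m i) (m k)) * (max (m i) (m k) - c) :=
    mul_pos (by omega) (by omega)
  rcases le_total (m i) (m k) with h | h
  · simp only [min_eq_left h, max_eq_right h] at hlt
    nlinarith
  · simp only [min_eq_right h, max_eq_left h] at hlt
    nlinarith

/-- The `i`-th loop equation (Schwinger–Dyson equation) for a function `Z` of the exponents
`m : ι → ℕ` is the vanishing of `loopDefect N m i Z` for all `m`. -/
def loopDefect (N : ℕ) (m : ι → ℕ) (i : ι) : ((ι → ℕ) → R) →ₗ[R] R :=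
  ((m i : R) - N) • LinearMap.proj m + ∑ k ∈ univ.erase i,
    (∑ c ∈ Ioc 0 (m i), LinearMap.proj (transferExponent m i k c) -
      ∑ c ∈ Ioc 0 (m k), LinearMap.proj (transferExponent m i k c))

theorem loopDefect_apply (N : ℕ) (m : ι → ℕ) (i : ι) (Z : (ι → ℕ) → R) :
    loopDefect N m i Z = (m i - N) * Z m + ∑ k ∈ univ.erase i,
      (∑ c ∈ Ioc 0 (m i), Z (transferExponent m i k c) -
        ∑ c ∈ Ioc 0 (m k), Z (transferExponent m i k c)) := by
  simp [loopDefect]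

theorem exists_sub_add_sum_sign_ne_zero {N : ℕ} {m : ι → ℕ} (hm : m ≠ fun _ => N) :
    ∃ i, (m i - N + ∑ k ∈ univ.erase i, Int.sign (m i - m k) : ℤ) ≠ 0 := by
  obtain ⟨j, hj⟩ := Function.ne_iff.1 hm
  rcases hj.lt_or_gt with hj | hj
  · obtain ⟨i, -, hi⟩ := exists_min_image univ m ⟨j, mem_univ j⟩
    have hsum : ∑ k ∈ univ.erase i, Int.sign (m i - m k : ℤ) ≤ 0 := sum_nonpos fun k _ =>
      Int.sign_nonpos_iff.2 (sub_nonpos.2 (Int.ofNat_le.2 (hi k (mem_univ k))))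
    have := hi j (mem_univ j)
    exact ⟨i, by omega⟩
  · obtain ⟨i, -, hi⟩ := exists_max_image univ m ⟨j, mem_univ j⟩
    have hsum : 0 ≤ ∑ k ∈ univ.erase i, Int.sign (m i - m k : ℤ) := sum_nonneg fun k _ =>
      Int.sign_nonneg_iff.2 (sub_nonneg.2 (Int.ofNat_le.2 (hi k (mem_univ k))))
    have := hi j (mem_univ j)
    exact ⟨i, by omega⟩

/-- Transferring between unequal exponents decreases the sum of their squares, unless it swaps them.
By induction on that sum, the `i`-th loop equation is a nonzero multiple of `Z m = 0` when `m i` is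
an extreme exponent different from `N`. -/
theorem eq_zero_of_loopDefect_eq_zero [IsDomain R] [CharZero R] {N : ℕ} {Z : (ι → ℕ) → R}
    (hsymm : ∀ (m : ι → ℕ) (π : Perm ι), Z (m ∘ π) = Z m)
    (hloop : ∀ m i, loopDefect N m i Z = 0) (hconst : Z (fun _ => N) = 0) : Z = 0 := by
  funext m
  induction hs : ∑ j, m j ^ 2 using Nat.strong_induction_on generalizing m with
  | _ s ih =>
  subst hs
  by_cases hm : m = fun _ => N
  · rwa [hm]
  obtain ⟨i, hi⟩ := exists_sub_add_sum_sign_ne_zero hm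
  refine (mul_eq_zero.1 ?_).resolve_left (Int.cast_ne_zero (α := R).2 hi)
  have pair_sum (k : ι) (hk : k ∈ univ.erase i) :=
    sum_transferExponent_sub_sum_of_forall_eq_zero (hsymm m (swap i k)) fun c hc hc' =>
      ih _ (sum_sq_transferExponent_lt m (ne_of_mem_erase hk).symm hc hc') _ rfl
  rw [← hloop m i, loopDefect_apply, sum_congr rfl pair_sum, ← sum_mul, ← add_mul]
  push_cast
  rfl

end LoopEquations

section DiagonalCoefficient

open Equiv Finset MvPolynomial

theorem derivation_prod {R A M α : Type*} [CommSemiring R] [CommSemiring A] [Algebra R A]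
    [AddCommMonoid M] [Module R M] [Module A M] [DecidableEq α] (D : Derivation R A M)
    (s : Finset α) (f : α → A) :
    D (∏ a ∈ s, f a) = ∑ a ∈ s, (∏ b ∈ s.erase a, f b) • D (f a) := by
  induction s using Finset.induction_on with
  | empty => simp
  | insert a s ha ih =>
    rw [prod_insert ha, D.leibniz, ih, sum_insert ha, erase_insert ha, smul_sum, add_comm]
    refine congrArg _ (sum_congr rfl fun b hb => ?_)
    rw [erase_insert_of_ne (ne_of_mem_of_not_mem hb ha).symm,
      prod_insert (fun h => ha (mem_of_mem_erase h)), mul_smul]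

variable {ι R : Type*} [Fintype ι] [CommRing R]

/-- The coefficient of `∏ j, X j ^ K`. Up to the shift by `K`, this is the constant term of a
Laurent polynomial, that is, its integral over a torus. -/
def diagCoeff (K : ℕ) : MvPolynomial ι R →ₗ[R] R :=
  lcoeff R (Finsupp.equivFunOnFinite.symm fun _ => K)

theorem diagCoeff_X_mul_pderiv (K : ℕ) (i : ι) (P : MvPolynomial ι R) :
    diagCoeff K (X i * pderiv i P) = K * diagCoeff K P := by
  classical
  induction P using MvPolynomial.induction_on' with
  | monomial d a =>
    simp only [X_mul_pderiv_monomial, map_nsmul, diagCoeff, lcoeff_apply, coeff_monomial]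
    split_ifs with h <;> simp [h]
  | add P Q hP hQ => simp only [map_add, mul_add, hP, hQ]

theorem diagCoeff_rename (K : ℕ) (π : Perm ι) (P : MvPolynomial ι R) :
    diagCoeff K (rename π P) = diagCoeff K P := by
  have h : (Finsupp.equivFunOnFinite.symm fun _ : ι => K) =
      (Finsupp.equivFunOnFinite.symm fun _ : ι => K).mapDomain π := by
    ext j
    simp [Finsupp.mapDomain_equiv_apply]
  simp only [diagCoeff, lcoeff_apply]
  rw [h, coeff_rename_mapDomain _ π.injective, ← h]

theorem diagCoeff_prod_X_pow (K : ℕ) (d : ι → ℕ) :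
    diagCoeff K (∏ j, X j ^ d j : MvPolynomial ι R) = if ∀ j, d j = K then 1 else 0 := by
  classical
  simp [diagCoeff, coeff_prod_X_pow, Finsupp.ext_iff, eq_comm]

theorem X_mul_pderiv_prod_X_pow (m : ι → ℕ) (i : ι) :
    X i * pderiv i (∏ j, X j ^ m j : MvPolynomial ι R) =
      (m i : MvPolynomial ι R) * ∏ j, X j ^ m j := by
  classical
  rw [prod_X_pow, X_mul_pderiv_monomial]
  simp

variable [DecidableEq ι]

variable (ι R) in
/-- The Weyl density `∏_{p ≠ q} (z_p - z_q)` of the unitary group, up to sign and a power of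
`∏ j, z_j`. -/
def weylDensity : MvPolynomial ι R := ∏ p ∈ univ.offDiag, (X p.1 - X p.2)

variable (R) in
/-- The product of the factors of `weylDensity` other than `X i - X k` and `X k - X i`. -/
def weylCofactor (i k : ι) : MvPolynomial ι R :=
  ∏ p ∈ (univ.offDiag.erase (i, k)).erase (k, i), (X p.1 - X p.2)

theorem prod_offDiag_erase {i k : ι} (hik : i ≠ k) :
    ∏ p ∈ univ.offDiag.erase (i, k), (X p.1 - X p.2 : MvPolynomial ι R) =
      (X k - X i) * weylCofactor R i k :=
  have h : (k, i) ∈ univ.offDiag.erase (i, k) := by simp [hik, hik.symm]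
  (mul_prod_erase _ (fun p : ι × ι => (X p.1 - X p.2 : MvPolynomial ι R)) h).symm

theorem weylDensity_eq_mul_weylCofactor {i k : ι} (hik : i ≠ k) :
    weylDensity ι R = -(X i - X k) ^ 2 * weylCofactor R i k := by
  rw [weylDensity, ← mul_prod_erase _ _ (by simpa using hik : (i, k) ∈ univ.offDiag),
    prod_offDiag_erase hik]
  ring

theorem weylCofactor_comm (i k : ι) : weylCofactor R i k = weylCofactor R k i := by
  rw [weylCofactor, weylCofactor, erase_right_comm]

theorem rename_swap_weylCofactor (i k : ι) :
    rename (swap i k) (weylCofactor R i k) = weylCofactor R i k := by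
  simp only [weylCofactor, map_prod, map_sub, rename_X]
  refine prod_equiv ((swap i k).prodCongr (swap i k)) (fun p => ?_) fun p _ => by simp
  simp only [mem_erase, mem_offDiag, mem_univ, Prod.ext_iff, ne_eq, prodCongr_apply, Prod.map,
    swap_apply_eq_iff, swap_apply_left, swap_apply_right, (swap i k).injective.eq_iff]
  tauto

theorem sum_offDiag_ite_fst {M : Type*} [AddCommMonoid M] (i : ι) (F : ι → M) :
    ∑ p ∈ univ.offDiag, (if p.1 = i then F p.2 else 0) = ∑ k ∈ univ.erase i, F k := by
  rw [← sum_filter]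
  exact sum_nbij' Prod.snd (fun k => (i, k)) (by grind) (by grind) (by grind) (by grind) (by grind)

theorem sum_offDiag_ite_snd {M : Type*} [AddCommMonoid M] (i : ι) (F : ι → M) :
    ∑ p ∈ univ.offDiag, (if p.2 = i then F p.1 else 0) = ∑ k ∈ univ.erase i, F k := by
  rw [← sum_filter]
  exact sum_nbij' Prod.fst (fun k => (k, i)) (by grind) (by grind) (by grind) (by grind) (by grind)

theorem X_mul_pderiv_weylDensity (i : ι) :
    X i * pderiv i (weylDensity ι R) =
      -∑ k ∈ univ.erase i, 2 * X i * (X i - X k) * weylCofactor R i k := by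
  have factor_pderiv : ∀ p ∈ univ.offDiag,
      (∏ q ∈ univ.offDiag.erase p, (X q.1 - X q.2 : MvPolynomial ι R)) •
        pderiv i (X p.1 - X p.2) =
      (if p.1 = i then (X p.2 - X i) * weylCofactor R i p.2 else 0) +
        (if p.2 = i then (X p.1 - X i) * weylCofactor R i p.1 else 0) := by
    rintro ⟨a, b⟩ hab
    replace hab : a ≠ b := by simpa using hab
    rw [prod_offDiag_erase hab, map_sub, pderiv_X, pderiv_X, smul_eq_mul]
    by_cases ha : a = i <;> by_cases hb : b = i
    · exact absurd (ha.trans hb.symm) hab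
    · simp [ha, hb]
    · simp only [weylCofactor_comm a i, ha, hb, if_false, if_true, Pi.single_eq_same,
        Pi.single_eq_of_ne ha]
      ring
    · simp [ha, hb]
  rw [weylDensity, derivation_prod, sum_congr rfl factor_pderiv, sum_add_distrib,
    sum_offDiag_ite_fst i fun k => (X k - X i) * weylCofactor R i k,
    sum_offDiag_ite_snd i fun k => (X k - X i) * weylCofactor R i k,
    ← sum_add_distrib, mul_sum, ← sum_neg_distrib]
  exact sum_congr rfl fun k _ => by ring

theorem X_mul_pderiv_weylDensity_eq_natCast_mul_sub (i : ι) :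
    X i * pderiv i (weylDensity ι R) =
      ((Fintype.card ι - 1 : ℕ) : MvPolynomial ι R) * weylDensity ι R -
        ∑ k ∈ univ.erase i, (X i + X k) * (X i - X k) * weylCofactor R i k := by
  have hcard : ((Fintype.card ι - 1 : ℕ) : MvPolynomial ι R) * weylDensity ι R =
      ∑ k ∈ univ.erase i, -(X i - X k) ^ 2 * weylCofactor R i k := by
    rw [sum_congr rfl fun k hk => (weylDensity_eq_mul_weylCofactor (ne_of_mem_erase hk).symm).symm]
    simp
  rw [X_mul_pderiv_weylDensity, hcard, ← sum_neg_distrib, ← sum_sub_distrib]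
  exact sum_congr rfl fun k _ => by ring

theorem sub_mul_sum_Ioc_pow_mul_pow {A : Type*} [CommRing A] (x y : A) {M s : ℕ} (h : M ≤ s) :
    (x - y) * ∑ c ∈ Ioc 0 M, x ^ c * y ^ (s - c) = x * (x ^ M * y ^ (s - M) - y ^ s) := by
  induction M with
  | zero => simp
  | succ M ih =>
    rw [← Finset.insert_Ioc_right_eq_Ioc_add_one (by omega), sum_insert (by simp), mul_add,
      ih (by omega), show s - M = s - (M + 1) + 1 by omega]
    ring

theorem prod_X_pow_transferExponent (m : ι → ℕ) {i k : ι} (hik : i ≠ k) (c : ℕ) :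
    (∏ j, X j ^ transferExponent m i k c j : MvPolynomial ι R) =
      X i ^ c * X k ^ (m i + m k - c) * ∏ j ∈ (univ.erase i).erase k, X j ^ m j := by
  rw [← mul_prod_erase _ _ (mem_univ i), ← mul_prod_erase _ _ (mem_erase.2 ⟨hik.symm, mem_univ k⟩),
    ← mul_assoc]
  congr 1
  · simp [transferExponent, hik]
  · refine prod_congr rfl fun j hj => ?_
    simp_all [transferExponent]

theorem rename_swap_prod_X_pow (m : ι → ℕ) (i k : ι) :
    rename (swap i k) (∏ j ∈ (univ.erase i).erase k, X j ^ m j : MvPolynomial ι R) =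
      ∏ j ∈ (univ.erase i).erase k, X j ^ m j := by
  simp only [map_prod, map_pow, rename_X]
  refine prod_congr rfl fun j hj => ?_
  simp only [mem_erase] at hj
  rw [swap_apply_of_ne_of_ne hj.2.1 hj.1]

theorem diagCoeff_sum_transferExponent_sub_sum (K : ℕ) (m : ι → ℕ) {i k : ι} (hik : i ≠ k) :
    ∑ c ∈ Ioc 0 (m i), diagCoeff K ((∏ j, X j ^ transferExponent m i k c j) * weylDensity ι R) -
        ∑ c ∈ Ioc 0 (m k),
          diagCoeff K ((∏ j, X j ^ transferExponent m i k c j) * weylDensity ι R) =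
      -diagCoeff K ((∏ j, X j ^ m j) * ((X i + X k) * (X i - X k) * weylCofactor R i k)) := by
  set r : MvPolynomial ι R := ∏ j ∈ (univ.erase i).erase k, X j ^ m j with hr
  have hsum {M : ℕ} (hM : M ≤ m i + m k) :
      ∑ c ∈ Ioc 0 M, (∏ j, X j ^ transferExponent m i k c j) * weylDensity ι R =
        -(X i - X k) * (X i * (X i ^ M * X k ^ (m i + m k - M) - X k ^ (m i + m k))) *
          (r * weylCofactor R i k) := by
    rw [← sub_mul_sum_Ioc_pow_mul_pow _ _ hM, ← sum_mul, weylDensity_eq_mul_weylCofactor hik,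
      sum_congr rfl fun c _ => prod_X_pow_transferExponent m hik c, ← sum_mul]
    ring
  have hswap := diagCoeff_rename K (swap i k)
    ((X i - X k) * X i * (X i ^ m k * X k ^ m i) * (r * weylCofactor R i k))
  have hm : (∏ j, X j ^ m j : MvPolynomial ι R) = X i ^ m i * X k ^ m k * r := by
    simpa [transferExponent_self_left] using prod_X_pow_transferExponent (R := R) m hik (m i)
  simp only [map_mul, map_sub, map_pow, rename_X, swap_apply_left, swap_apply_right,
    rename_swap_weylCofactor, hr, rename_swap_prod_X_pow] at hswap
  simp only [← map_sum, ← map_neg, ← map_sub]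
  rw [hsum (Nat.le_add_right _ _), hsum (Nat.le_add_left _ _), Nat.add_sub_cancel_left,
    Nat.add_sub_cancel, hm, ← sub_eq_zero, ← map_sub]
  rw [← sub_eq_zero, ← map_sub] at hswap
  rw [← neg_eq_zero, ← map_neg, ← hswap]
  congr 1
  ring

theorem loopDefect_diagCoeff (N : ℕ) (m : ι → ℕ) (i : ι) :
    loopDefect N m i (fun m => diagCoeff (N + (Fintype.card ι - 1))
      ((∏ j, X j ^ m j) * weylDensity ι R)) = 0 := by
  set P : MvPolynomial ι R := ∏ j, X j ^ m j
  have hderiv : X i * pderiv i (P * weylDensity ι R) =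
      (m i + (Fintype.card ι - 1)) • (P * weylDensity ι R) -
        ∑ k ∈ univ.erase i, P * ((X i + X k) * (X i - X k) * weylCofactor R i k) := by
    rw [Derivation.leibniz, smul_eq_mul, smul_eq_mul, ← mul_sum, nsmul_eq_mul, Nat.cast_add]
    linear_combination P * X_mul_pderiv_weylDensity_eq_natCast_mul_sub (R := R) i +
      weylDensity ι R * X_mul_pderiv_prod_X_pow (R := R) m i
  have euler := diagCoeff_X_mul_pderiv (N + (Fintype.card ι - 1)) i (P * weylDensity ι R)
  rw [hderiv, map_sub, map_nsmul, map_sum, nsmul_eq_mul] at euler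
  rw [loopDefect_apply, sum_congr rfl fun k hk =>
    diagCoeff_sum_transferExponent_sub_sum _ m (ne_of_mem_erase hk).symm, sum_neg_distrib]
  push_cast at euler
  linear_combination euler

end DiagonalCoefficient

section ShiftMatrix

open Equiv Finset MvPolynomial

variable (R : Type*) [CommRing R] (l : ℕ)

/-- The `l × l` Toeplitz matrix with ones on its `n`-th diagonal and zeros elsewhere. -/
def shiftMatrix (n : ℤ) : Matrix (Fin l) (Fin l) R :=
  of fun a b => if (b : ℤ) - a = n then 1 else 0

theorem shiftMatrix_zero : shiftMatrix R l 0 = 1 := by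
  ext a b
  simp [shiftMatrix, one_apply, sub_eq_zero, Fin.ext_iff, eq_comm]

theorem weylDensity_eq_det_mul_det :
    weylDensity (Fin l) R =
      (vandermonde (X : Fin l → MvPolynomial (Fin l) R)).det *
        (projVandermonde (1 : Fin l → MvPolynomial (Fin l) R) X).det := by
  rw [det_vandermonde, det_projVandermonde, ← prod_mul_distrib, weylDensity,
    prod_finset_product_right' _ univ (fun a => {a}ᶜ) (by simp) (f := fun a b => X a - X b)]
  simp only [← prod_mul_distrib, Pi.one_apply, one_mul]
  exact (prod_prod_Ioi_mul_eq_prod_prod_off_diag fun a b => X a - X b).symm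

variable {R l}

theorem diagCoeff_prod_X_pow_mul_weylDensity (N : ℕ) (m : Fin l → ℕ) :
    diagCoeff (N + (Fintype.card (Fin l) - 1)) ((∏ j, X j ^ m j) * weylDensity (Fin l) R) =
      mixedDet fun k => shiftMatrix R l (m k - N) := by
  have monomial (σ τ : Perm (Fin l)) :
      diagCoeff (N + (Fintype.card (Fin l) - 1)) (∏ j, X j ^ (m j + σ j + (τ j).rev)) =
        ∏ j, shiftMatrix R l (m j - N) (σ j) (τ j) := by
    simp only [diagCoeff_prod_X_pow, shiftMatrix, of_apply, prod_boole, mem_univ, true_imp_iff,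
      Fintype.card_fin, Fin.val_rev]
    have exponent_iff (j : Fin l) : m j + σ j + (l - (τ j + 1)) = N + (l - 1) ↔
        (τ j : ℤ) - σ j = m j - N := by omega
    simp only [exponent_iff]
  rw [weylDensity_eq_det_mul_det, ← det_transpose (vandermonde _),
    ← det_transpose (projVandermonde _ _), det_apply', det_apply', sum_mul_sum, mul_sum, map_sum,
    mixedDet_eq_sum_sum_sign]
  refine sum_congr rfl fun σ _ => ?_
  rw [mul_sum, map_sum]
  refine sum_congr rfl fun τ _ => ?_
  rw [← monomial, ← smul_eq_mul (_ * _ : R), ← map_smul, MvPolynomial.smul_eq_C_mul]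
  simp only [transpose_apply, vandermonde_apply, projVandermonde_apply, Pi.one_apply, one_pow,
    one_mul, pow_add, prod_mul_distrib, map_mul, map_intCast]
  rw [mul_mul_mul_comm, mul_left_comm, mul_assoc (∏ j, X j ^ m j)]

theorem loopDefect_mixedDet_shiftMatrix (N : ℕ) (m : Fin l → ℕ) (i : Fin l) :
    loopDefect N m i (fun m => mixedDet fun k => shiftMatrix R l (m k - N)) = 0 := by
  simpa only [diagCoeff_prod_X_pow_mul_weylDensity] using loopDefect_diagCoeff (R := R) N m i

end ShiftMatrix

section PowerDerivative

open Equiv Finset Function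

variable {n R : Type*} [Fintype n] [DecidableEq n] [CommRing R]

/-- The derivative of `V ↦ V ^ m` at `V` in the direction `X * V`. -/
def powDeriv (V X : Matrix n n R) (m : ℕ) : Matrix n n R :=
  ∑ c ∈ Ioc 0 m, V ^ (m - c) * X * V ^ c

theorem sum_single_mul_mul_single_mul (P Q : Matrix n n R) :
    ∑ a, ∑ b, single b a 1 * (Q * single a b 1 * P) = Q.trace • P := by
  ext p q
  simp [Matrix.sum_apply, mul_apply, single_apply, trace, sum_mul, ite_and]

theorem mixedDet_update_update_comm (A : n → Matrix n n R) {i k : n} (hik : i ≠ k)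
    (P Q : Matrix n n R) :
    mixedDet (update (update A i P) k Q) = mixedDet (update (update A i Q) k P) := by
  rw [← mixedDet_comp_perm _ (swap i k)]
  congr 1
  ext1 j
  rcases eq_or_ne j k with rfl | hk
  · simp [update_of_ne hik]
  · rcases eq_or_ne j i with rfl | hi
    · simp [update_of_ne hik]
    · simp [swap_apply_of_ne_of_ne hi hk, hk, hi]

theorem trace_mul_mixedDet_pow (V : Matrix n n R) (m : n → ℕ) (i : n) {c : ℕ} (hc : c ≤ m i) :
    (V ^ (m i - c)).trace * mixedDet (update (fun j => V ^ m j) i (V ^ c)) =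
      mixedDet (fun j => V ^ m j) +
        ∑ k ∈ univ.erase i, mixedDet fun j => V ^ transferExponent m i k c j := by
  rw [← sum_mixedDet_update_mul, ← add_sum_erase _ _ (mem_univ i)]
  congr 1
  · rw [update_idem, update_self, ← pow_add, Nat.sub_add_cancel hc, update_eq_self]
  · refine sum_congr rfl fun k hk => ?_
    rw [update_of_ne (ne_of_mem_erase hk), ← pow_add, ← Nat.sub_add_comm hc]
    exact congrArg _ (comp_transferExponent (V ^ ·) m i k c).symm

theorem sum_mixedDet_powDeriv_self (V : Matrix n n R) (m : n → ℕ) (i : n) :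
    ∑ a, ∑ b, mixedDet (update (fun j => V ^ m j) i
        (single b a 1 * powDeriv V (single a b 1) (m i))) =
      m i * mixedDet (fun j => V ^ m j) + ∑ k ∈ univ.erase i, ∑ c ∈ Ioc 0 (m i),
        mixedDet fun j => V ^ transferExponent m i k c j := by
  calc _ = ∑ c ∈ Ioc 0 (m i),
        (V ^ (m i - c)).trace * mixedDet (update (fun j => V ^ m j) i (V ^ c)) := by
        simp only [← mixedDet.map_update_sum, powDeriv, mul_sum]
        rw [sum_congr rfl fun _ _ => sum_comm, sum_comm]
        simp only [sum_single_mul_mul_single_mul, mixedDet.map_update_sum,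
          mixedDet.map_update_smul, smul_eq_mul]
    _ = _ := by
        rw [sum_congr rfl fun c hc => trace_mul_mixedDet_pow V m i (mem_Ioc.1 hc).2,
          sum_add_distrib, sum_comm]
        simp

theorem sum_mixedDet_powDeriv_of_ne (V : Matrix n n R) (m : n → ℕ) {i k : n} (hik : i ≠ k) :
    ∑ a, ∑ b, mixedDet (update (update (fun j => V ^ m j) i (single b a 1 * V ^ m i)) k
        (powDeriv V (single a b 1) (m k))) =
      -∑ c ∈ Ioc 0 (m k), mixedDet fun j => V ^ transferExponent m i k c j := by
  simp only [powDeriv, mixedDet.map_update_sum]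
  rw [sum_congr rfl fun _ _ => sum_comm, sum_comm, ← sum_neg_distrib]
  refine sum_congr rfl fun c hc => ?_
  rw [sum_mixedDet_update_single _ hik, mixedDet_update_update_comm _ hik, ← pow_add,
    ← Nat.sub_add_comm (mem_Ioc.1 hc).2, add_comm (m k)]
  exact congrArg (fun A => -mixedDet A) (comp_transferExponent (V ^ ·) m i k c).symm

theorem sum_trace_mul_mixedDet_single (A : n → Matrix n n R) (i : n) :
    ∑ a, ∑ b, (single a b (1 : R)).trace * mixedDet (update A i (single b a 1 * A i)) =
      mixedDet A := by
  have diagonal (a : n) : ∑ b, (single a b (1 : R)).trace *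
      mixedDet (update A i (single b a 1 * A i)) = mixedDet (update A i (single a a 1 * A i)) := by
    rw [Fintype.sum_eq_single a fun b hb => by rw [trace_single_eq_of_ne _ _ _ hb.symm, zero_mul],
      trace_single_eq_same, one_mul]
  simp only [diagonal, ← mixedDet.map_update_sum, ← sum_mul, sum_single_one, one_mul,
    update_eq_self]

theorem sum_mixedDet_powDeriv_sub (N : ℕ) (V : Matrix n n R) (m : n → ℕ) (i : n) :
    ∑ a, ∑ b, (∑ k, mixedDet (update
        (fun k => update (1 : n → Matrix n n R) i (single b a 1) k * V ^ m k) k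
          (update (1 : n → Matrix n n R) i (single b a 1) k *
            powDeriv V (single a b 1) (m k))) -
        N * (single a b (1 : R)).trace * mixedDet fun k =>
          update (1 : n → Matrix n n R) i (single b a 1) k * V ^ m k) =
      loopDefect N m i fun m => mixedDet fun k => V ^ m k := by
  have factors (a b : n) : (fun k => update (1 : n → Matrix n n R) i (single b a 1) k * V ^ m k) =
      update (fun k => V ^ m k) i (single b a 1 * V ^ m i) := by
    ext1 k
    rcases eq_or_ne k i with rfl | hk
    · simp
    · simp [hk]
  have off_diag (k : n) (hk : k ∈ univ.erase i) : ∑ a, ∑ b, mixedDet (update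
      (update (fun k => V ^ m k) i (single b a (1 : R) * V ^ m i)) k
      (update (1 : n → Matrix n n R) i (single b a 1) k * powDeriv V (single a b 1) (m k))) =
      -∑ c ∈ Ioc 0 (m k), mixedDet fun j => V ^ transferExponent m i k c j := by
    have hki := ne_of_mem_erase hk
    simp only [update_of_ne hki, Pi.one_apply, one_mul]
    exact sum_mixedDet_powDeriv_of_ne V m hki.symm
  simp only [factors, sum_sub_distrib, mul_assoc, ← mul_sum,
    sum_trace_mul_mixedDet_single (fun k => V ^ m k) i]
  rw [sum_congr rfl fun _ _ => sum_comm, sum_comm, ← add_sum_erase _ _ (mem_univ i),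
    sum_congr rfl off_diag, loopDefect_apply]
  simp only [update_idem, update_self, sum_mixedDet_powDeriv_self, sum_sub_distrib,
    sum_neg_distrib]
  ring

end PowerDerivative

section LeftInvariance

variable {G E : Type*} [Group G] [TopologicalSpace G] [CompactSpace G] [ContinuousMul G]
  [MeasurableSpace G] [BorelSpace G] [NormedAddCommGroup E] [NormedSpace ℝ E]

theorem integral_eq_zero_of_hasDerivAt_mul_left (μ : Measure G) [IsFiniteMeasure μ]
    [μ.IsMulLeftInvariant] {F F' : G → E} (hF : Continuous F) (hF' : Continuous F')
    {φ : ℝ → G} (hφ : ∀ s t, φ (s + t) = φ s * φ t)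
    (h : ∀ g, HasDerivAt (fun t => F (φ t * g)) (F' g) 0) : ∫ g, F' g ∂μ = 0 := by
  have φ_zero : φ 0 = 1 := by simpa using hφ 0 0
  have hasDerivAt_flow (g : G) (t : ℝ) :
      HasDerivAt (fun t => F (φ t * g)) (F' (φ t * g)) t := by
    have shifted := h (φ t * g)
    simp only [← mul_assoc, ← hφ] at shifted
    rw [← sub_self t] at shifted
    simpa using shifted.comp_sub_const t t
  obtain ⟨C, hC⟩ := isCompact_univ.exists_bound_of_continuousOn hF'.continuousOn
  have integrable_flow {f : G → E} (hf : Continuous f) (t : ℝ) :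
      Integrable (fun g => f (φ t * g)) μ :=
    (hf.comp (continuous_const_mul _)).integrable_of_hasCompactSupport
      (HasCompactSupport.of_compactSpace _)
  have hasDerivAt_integral : HasDerivAt (fun t => ∫ g, F (φ t * g) ∂μ)
      (∫ g, F' (φ 0 * g) ∂μ) 0 :=
    (hasDerivAt_integral_of_dominated_loc_of_deriv_le (F := fun t g => F (φ t * g))
      (F' := fun t g => F' (φ t * g)) (bound := fun _ => C) Filter.univ_mem
      (.of_forall fun t => (integrable_flow hF t).aestronglyMeasurable) (integrable_flow hF 0)
      (integrable_flow hF' 0).aestronglyMeasurable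
      (.of_forall fun g t _ => hC _ (Set.mem_univ (φ t * g))) (integrable_const C)
      (.of_forall fun g t _ => hasDerivAt_flow g t)).2
  simp only [integral_mul_left_eq_self, φ_zero, one_mul] at hasDerivAt_integral
  exact hasDerivAt_integral.unique (hasDerivAt_const _ _)

end LeftInvariance

section ExpUnitary

variable {A : Type*} [NormedRing A] [NormedAlgebra ℂ A] [StarRing A] [ContinuousStar A]
  [CompleteSpace A] [StarModule ℂ A]

theorem expUnitary_add_smul (H : selfAdjoint A) (s t : ℝ) :
    selfAdjoint.expUnitary ((s + t) • H) =
      selfAdjoint.expUnitary (s • H) * selfAdjoint.expUnitary (t • H) := by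
  rw [add_smul]
  exact Commute.expUnitary_add (((Commute.refl (H : A)).smul_left s).smul_right t)

theorem hasDerivAt_expUnitary_smul_mul (H : selfAdjoint A) (a : A) :
    HasDerivAt (fun t : ℝ => (selfAdjoint.expUnitary (t • H) : A) * a)
      (Complex.I • (H : A) * a) 0 := by
  have hasDerivAt_exp := hasDerivAt_exp_smul_const' (𝕂 := ℝ) (Complex.I • (H : A)) 0
  simpa [smul_comm Complex.I] using hasDerivAt_exp.mul_const a

end ExpUnitary

section UnitaryGroup

variable {n : Type*} [Fintype n] [DecidableEq n]

instance compactSpace_unitaryGroup : CompactSpace (unitaryGroup n ℂ) := by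
  refine isCompact_iff_compactSpace.1 (IsCompact.of_isClosed_subset (isCompact_univ_pi
    fun _ => isCompact_univ_pi fun _ => isCompact_closedBall (0 : ℂ) 1) isClosed_unitary ?_)
  intro U hU i _ j _
  simpa using entry_norm_bound_of_unitary hU i j

theorem star_det_mul_det (U : unitaryGroup n ℂ) :
    star (U : Matrix n n ℂ).det * (U : Matrix n n ℂ).det = 1 :=
  (Unitary.mem_iff.1 (det_of_mem_unitary U.2)).1

end UnitaryGroup

section MixedDiscriminantDerivative

open Finset Function

open scoped Matrix.Norms.L2Operator

variable {n E : Type*} [Fintype n] [DecidableEq n] [NormedAddCommGroup E] [NormedSpace ℂ E]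

/-- The mixed discriminant as a continuous multilinear map, to access the calculus of such maps. -/
def continuousMixedDet : ContinuousMultilinearMap ℂ (fun _ : n => Matrix n n ℂ) ℂ where
  toMultilinearMap := mixedDet
  cont := by
    simp only [MultilinearMap.toFun_eq_coe, funext mixedDet_apply, col_def]
    fun_prop

theorem continuousMixedDet_apply (A : n → Matrix n n ℂ) : continuousMixedDet A = mixedDet A :=
  rfl

theorem contDiff_mixedDet {k : WithTop ℕ∞} {f : n → E → Matrix n n ℂ}
    (hf : ∀ i, ContDiff ℂ k (f i)) : ContDiff ℂ k fun x => mixedDet fun i => f i x :=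
  (continuousMixedDet (n := n)).contDiff.comp (contDiff_pi.2 hf)

theorem fderiv_mixedDet {f : n → E → Matrix n n ℂ} {x : E}
    (hf : ∀ i, DifferentiableAt ℂ (f i) x) (v : E) :
    fderiv ℂ (fun x => mixedDet fun i => f i x) x v =
      ∑ i, mixedDet (update (fun i => f i x) i (fderiv ℂ (f i) x v)) := by
  have hasFDerivAt_mixedDet :=
    HasFDerivAt.multilinear_comp continuousMixedDet fun i => (hf i).hasFDerivAt
  simp only [← continuousMixedDet_apply]
  rw [hasFDerivAt_mixedDet.fderiv]
  simp

theorem fderiv_pow_mul (V X : Matrix n n ℂ) (m : ℕ) :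
    fderiv ℂ (fun V => V ^ m) V (X * V) = powDeriv V X m := by
  rw [fderiv_pow_ring', powDeriv, range_eq_Ico, ← Ico_add_one_add_one_eq_Ioc, ← sum_Ico_add']
  simp [Nat.sub_sub, add_comm 1, pow_succ', mul_assoc]

theorem fderiv_mixedDet_mul_pow (B : n → Matrix n n ℂ) (m : n → ℕ) (V X : Matrix n n ℂ) :
    fderiv ℂ (fun V => mixedDet fun k => B k * V ^ m k) V (X * V) =
      ∑ k, mixedDet (update (fun k => B k * V ^ m k) k (B k * powDeriv V X (m k))) := by
  rw [fderiv_mixedDet fun k => by fun_prop]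
  refine sum_congr rfl fun k _ => ?_
  rw [fderiv_const_mul (by fun_prop)]
  simp [fderiv_pow_mul]

theorem det_eq_inv_factorial_mul_mixedDet (V : Matrix n n ℂ) :
    V.det = ((Fintype.card n).factorial : ℂ)⁻¹ * mixedDet fun _ => V := by
  rw [mixedDet_const, inv_mul_cancel_left₀ (Nat.cast_ne_zero.2 (Nat.factorial_ne_zero _))]

theorem contDiff_det {k : WithTop ℕ∞} : ContDiff ℂ k (det : Matrix n n ℂ → ℂ) := by
  rw [funext det_eq_inv_factorial_mul_mixedDet]
  exact contDiff_const.mul (contDiff_mixedDet fun _ => contDiff_fun_id)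

theorem fderiv_det_mul (V X : Matrix n n ℂ) : fderiv ℂ det V (X * V) = X.trace * V.det := by
  rw [funext det_eq_inv_factorial_mul_mixedDet, fderiv_const_mul
    ((contDiff_mixedDet fun _ => contDiff_fun_id).differentiable one_ne_zero V)]
  have polarised : fderiv ℂ (fun V : Matrix n n ℂ => mixedDet fun _ => V) V (X * V) =
      X.trace * mixedDet fun _ => V := by
    simp [fderiv_mixedDet, sum_mixedDet_update_mul fun _ => V]
  rw [_root_.smul_apply, polarised, smul_eq_mul, mul_left_comm]

end MixedDiscriminantDerivative

section HaarLoopEquation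

open Finset Function

open scoped Matrix.Norms.L2Operator

variable {n : Type*} [Fintype n]

theorem star_trace_I_smul (H : selfAdjoint (Matrix n n ℂ)) :
    star (Complex.I • (H : Matrix n n ℂ)).trace = -(Complex.I • (H : Matrix n n ℂ)).trace := by
  rw [← trace_conjTranspose, conjTranspose_smul, ← star_eq_conjTranspose, selfAdjoint.mem_iff.1 H.2]
  simp

variable [DecidableEq n]

theorem hasDerivAt_comp_expUnitary_smul_mul {G : Matrix n n ℂ → ℂ} (hG : Differentiable ℂ G)
    (H : selfAdjoint (Matrix n n ℂ)) (V : Matrix n n ℂ) :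
    HasDerivAt (fun t : ℝ => G ((selfAdjoint.expUnitary (t • H) : Matrix n n ℂ) * V))
      (fderiv ℂ G V (Complex.I • (H : Matrix n n ℂ) * V)) 0 := by
  refine HasFDerivAt.comp_hasDerivAt_of_eq (0 : ℝ) ((hG V).hasFDerivAt.restrictScalars ℝ)
    (hasDerivAt_expUnitary_smul_mul H V) ?_
  simp

theorem hasDerivAt_star_det_pow_mul (N : ℕ) {G : Matrix n n ℂ → ℂ} (hG : Differentiable ℂ G)
    (H : selfAdjoint (Matrix n n ℂ)) (V : Matrix n n ℂ) :
    HasDerivAt (fun t : ℝ => (fun V => star V.det ^ N * G V)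
        ((selfAdjoint.expUnitary (t • H) : Matrix n n ℂ) * V))
      (star V.det ^ N * (fderiv ℂ G V (Complex.I • (H : Matrix n n ℂ) * V) -
        N * (Complex.I • (H : Matrix n n ℂ)).trace * G V)) 0 := by
  have hasDerivAt_star_det := (hasDerivAt_comp_expUnitary_smul_mul
    (contDiff_det.differentiable one_ne_zero) H V).star
  rw [fderiv_det_mul, star_mul', star_trace_I_smul] at hasDerivAt_star_det
  refine ((hasDerivAt_star_det.fun_pow N).mul
    (hasDerivAt_comp_expUnitary_smul_mul hG H V)).congr_deriv ?_
  rcases N with - | N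
  · simp
  · simp only [zero_smul, selfAdjoint.expUnitary_zero, OneMemClass.coe_one, one_mul]
    push_cast
    ring

variable [MeasurableSpace (unitaryGroup n ℂ)] [BorelSpace (unitaryGroup n ℂ)]
  (μ : Measure (unitaryGroup n ℂ)) [IsFiniteMeasure μ]

theorem integrable_star_det_pow_mul (N : ℕ) {G : Matrix n n ℂ → ℂ} (hG : Continuous G) :
    Integrable (fun U : unitaryGroup n ℂ => star (U : Matrix n n ℂ).det ^ N * G U) μ :=
  Continuous.integrable_of_hasCompactSupport (by fun_prop) (HasCompactSupport.of_compactSpace _)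

theorem integrable_star_det_pow_mul_fderiv (N : ℕ) {G : Matrix n n ℂ → ℂ} (hG : ContDiff ℂ 1 G)
    (X : Matrix n n ℂ) :
    Integrable (fun U : unitaryGroup n ℂ => star (U : Matrix n n ℂ).det ^ N *
      (fderiv ℂ G U (X * U) - N * X.trace * G U)) μ := by
  have := hG.continuous_fderiv one_ne_zero
  have continuous_G := hG.continuous
  exact integrable_star_det_pow_mul μ N
    (G := fun V => fderiv ℂ G V (X * V) - N * X.trace * G V) (by fun_prop)

theorem integral_star_det_pow_mul_fderiv_of_selfAdjoint [μ.IsMulLeftInvariant] (N : ℕ)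
    {G : Matrix n n ℂ → ℂ} (hG : ContDiff ℂ 1 G) (H : selfAdjoint (Matrix n n ℂ)) :
    ∫ U : unitaryGroup n ℂ, star (U : Matrix n n ℂ).det ^ N *
      (fderiv ℂ G U (Complex.I • (H : Matrix n n ℂ) * U) -
        N * (Complex.I • (H : Matrix n n ℂ)).trace * G U) ∂μ = 0 := by
  have := hG.continuous_fderiv one_ne_zero
  have continuous_G := hG.continuous
  exact integral_eq_zero_of_hasDerivAt_mul_left μ
    (F := fun U => star (U : Matrix n n ℂ).det ^ N * G U) (by fun_prop) (by fun_prop)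
    (expUnitary_add_smul H) fun U =>
      hasDerivAt_star_det_pow_mul N (hG.differentiable one_ne_zero) H U

theorem integral_star_det_pow_mul_fderiv [μ.IsMulLeftInvariant] (N : ℕ)
    {G : Matrix n n ℂ → ℂ} (hG : ContDiff ℂ 1 G) (X : Matrix n n ℂ) :
    ∫ U : unitaryGroup n ℂ, star (U : Matrix n n ℂ).det ^ N *
      (fderiv ℂ G U (X * U) - N * X.trace * G U) ∂μ = 0 := by
  have integrable := integrable_star_det_pow_mul_fderiv μ N hG
  obtain ⟨S, T, rfl⟩ : ∃ S T : selfAdjoint (Matrix n n ℂ), X =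
      Complex.I • (S : Matrix n n ℂ) + Complex.I • (Complex.I • (T : Matrix n n ℂ)) := by
    refine ⟨imaginaryPart X, -realPart X, ?_⟩
    rw [smul_smul, Complex.I_mul_I, neg_one_smul, NegMemClass.coe_neg, neg_neg, add_comm,
      realPart_add_I_smul_imaginaryPart]
  calc _ = ∫ U : unitaryGroup n ℂ, star (U : Matrix n n ℂ).det ^ N *
          (fderiv ℂ G U (Complex.I • (S : Matrix n n ℂ) * U) -
            N * (Complex.I • (S : Matrix n n ℂ)).trace * G U) + Complex.I *
        (star (U : Matrix n n ℂ).det ^ N * (fderiv ℂ G U (Complex.I • (T : Matrix n n ℂ) * U) -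
            N * (Complex.I • (T : Matrix n n ℂ)).trace * G U)) ∂μ := by
        congr! 2 with U
        rw [add_mul, smul_mul_assoc Complex.I (Complex.I • (T : Matrix n n ℂ)),
          map_add, map_smul, trace_add, trace_smul _ (Complex.I • (T : Matrix n n ℂ))]
        simp only [smul_eq_mul]
        ring
    _ = 0 := by
        rw [integral_add (integrable _) ((integrable _).const_mul _), integral_const_mul,
          integral_star_det_pow_mul_fderiv_of_selfAdjoint μ N hG,
          integral_star_det_pow_mul_fderiv_of_selfAdjoint μ N hG, mul_zero, add_zero]

end HaarLoopEquation

theorem loopDefect_integral {ι α 𝕜 : Type*} [Fintype ι] [DecidableEq ι] [RCLike 𝕜]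
    {_ : MeasurableSpace α} (μ : Measure α) (N : ℕ) (m : ι → ℕ) (i : ι)
    {f : (ι → ℕ) → α → 𝕜} (hf : ∀ m, Integrable (f m) μ) :
    loopDefect N m i (fun m => ∫ x, f m x ∂μ) = ∫ x, loopDefect N m i (fun m => f m x) ∂μ := by
  have integrable_sum (k : ι) (s : Finset ℕ) := integrable_finsetSum s fun c _ =>
    hf (transferExponent m i k c)
  have integrable_sub (k : ι) (_ : k ∈ Finset.univ.erase i) : Integrable (fun x =>
      ∑ c ∈ .Ioc 0 (m i), f (transferExponent m i k c) x -
        ∑ c ∈ .Ioc 0 (m k), f (transferExponent m i k c) x) μ :=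
    (integrable_sum k _).sub (integrable_sum k _)
  simp only [loopDefect_apply]
  rw [integral_add ((hf m).const_mul _) (integrable_finsetSum _ integrable_sub),
    integral_const_mul, integral_finsetSum _ integrable_sub]
  congr! 2 with k _
  rw [integral_sub (integrable_sum k _) (integrable_sum k _),
    integral_finsetSum _ fun c _ => hf _, integral_finsetSum _ fun c _ => hf _]

section HaarMixedDiscriminant

open Finset Function

open scoped Matrix.Norms.L2Operator

variable {n : Type*} [Fintype n] [DecidableEq n] [MeasurableSpace (unitaryGroup n ℂ)]

/-- The expectation of the mixed discriminant of powers of a unitary matrix, twisted by a power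
of the conjugate determinant. -/
def haarMixedDet (μ : Measure (unitaryGroup n ℂ)) (N : ℕ) (m : n → ℕ) : ℂ :=
  ∫ U : unitaryGroup n ℂ, star (U : Matrix n n ℂ).det ^ N *
    mixedDet (fun k => (U : Matrix n n ℂ) ^ m k) ∂μ

theorem haarMixedDet_comp_perm (μ : Measure (unitaryGroup n ℂ)) (N : ℕ) (m : n → ℕ)
    (π : Equiv.Perm n) : haarMixedDet μ N (m ∘ π) = haarMixedDet μ N m := by
  have symm (V : Matrix n n ℂ) := mixedDet_comp_perm (fun k => V ^ m k) π
  simp only [haarMixedDet, Function.comp_apply, symm]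

theorem haarMixedDet_const (μ : Measure (unitaryGroup n ℂ)) [IsProbabilityMeasure μ] (N : ℕ) :
    haarMixedDet μ N (fun _ => N) = (Fintype.card n).factorial := by
  have integrand (U : unitaryGroup n ℂ) : star (U : Matrix n n ℂ).det ^ N *
      mixedDet (fun _ => (U : Matrix n n ℂ) ^ N) = (Fintype.card n).factorial := by
    rw [mixedDet_const, det_pow, mul_left_comm, ← mul_pow, star_det_mul_det, one_pow, mul_one]
  simp only [haarMixedDet, integrand, integral_const, probReal_univ, one_smul]

variable [BorelSpace (unitaryGroup n ℂ)] (μ : Measure (unitaryGroup n ℂ))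

theorem integrable_star_det_pow_mul_mixedDet_pow [IsFiniteMeasure μ] (N : ℕ) (m : n → ℕ) :
    Integrable (fun U : unitaryGroup n ℂ => star (U : Matrix n n ℂ).det ^ N *
      mixedDet fun k => (U : Matrix n n ℂ) ^ m k) μ :=
  integrable_star_det_pow_mul μ N (G := fun V => mixedDet fun k => V ^ m k)
    (contDiff_mixedDet (k := 0) fun k => by fun_prop).continuous

theorem loopDefect_haarMixedDet [IsFiniteMeasure μ] [μ.IsMulLeftInvariant] (N : ℕ) (m : n → ℕ)
    (i : n) : loopDefect N m i (haarMixedDet μ N) = 0 := by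
  let G (a b : n) (V : Matrix n n ℂ) : ℂ :=
    mixedDet fun k => update (1 : n → Matrix n n ℂ) i (single b a 1) k * V ^ m k
  have contDiff_G (a b : n) : ContDiff ℂ 1 (G a b) :=
    contDiff_mixedDet fun k => by fun_prop
  have integrable (a b : n) :=
    integrable_star_det_pow_mul_fderiv μ N (contDiff_G a b) (single a b 1)
  have loopDefect_eq (V : Matrix n n ℂ) : ∑ a, ∑ b, star V.det ^ N *
      (fderiv ℂ (G a b) V (single a b 1 * V) - N * (single a b (1 : ℂ)).trace * G a b V) =
      loopDefect N m i fun m => star V.det ^ N * mixedDet fun k => V ^ m k := by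
    simp only [← mul_sum, G, fderiv_mixedDet_mul_pow, sum_mixedDet_powDeriv_sub]
    exact ((loopDefect N m i).map_smul _ fun m => mixedDet fun k => V ^ m k).symm
  calc _ = ∫ U : unitaryGroup n ℂ, loopDefect N m i (fun m =>
          star (U : Matrix n n ℂ).det ^ N * mixedDet fun k => (U : Matrix n n ℂ) ^ m k) ∂μ :=
        loopDefect_integral μ N m i (integrable_star_det_pow_mul_mixedDet_pow μ N)
    _ = ∑ a, ∑ b, ∫ U : unitaryGroup n ℂ, star (U : Matrix n n ℂ).det ^ N *
          (fderiv ℂ (G a b) U (single a b (1 : ℂ) * (U : Matrix n n ℂ)) -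
            N * (single a b (1 : ℂ)).trace * G a b U) ∂μ := by
        simp only [← loopDefect_eq]
        rw [integral_finsetSum _ fun a _ => integrable_finsetSum _ fun b _ => integrable a b]
        simp only [integral_finsetSum _ fun b _ => integrable _ b]
    _ = 0 := by
        simp only [integral_star_det_pow_mul_fderiv μ N (contDiff_G _ _), sum_const_zero]

end HaarMixedDiscriminant

theorem haarMixedDet_eq_mixedDet_shiftMatrix {l : ℕ} [MeasurableSpace (unitaryGroup (Fin l) ℂ)]
    [BorelSpace (unitaryGroup (Fin l) ℂ)] (μ : Measure (unitaryGroup (Fin l) ℂ))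
    [IsProbabilityMeasure μ] [μ.IsMulLeftInvariant] (N : ℕ) (m : Fin l → ℕ) :
    haarMixedDet μ N m = mixedDet fun k => shiftMatrix ℂ l (m k - N) := by
  set shiftMixedDet : (Fin l → ℕ) → ℂ := fun m => mixedDet fun k => shiftMatrix ℂ l (m k - N)
  suffices haarMixedDet μ N - shiftMixedDet = 0 from congrFun (sub_eq_zero.1 this) m
  refine eq_zero_of_loopDefect_eq_zero (N := N) (fun m π => ?_) (fun m i => ?_) ?_
  · exact congr_arg₂ (· - ·) (haarMixedDet_comp_perm μ N m π)
      (mixedDet_comp_perm (fun k => shiftMatrix ℂ l (m k - N)) π)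
  · rw [map_sub, loopDefect_haarMixedDet, loopDefect_mixedDet_shiftMatrix, sub_zero]
  · simp [shiftMixedDet, haarMixedDet_const, shiftMatrix_zero, mixedDet_const]

section Coefficients

open Finset Polynomial

theorem coeffZ_natCast (p : ℂ[X]) (d : ℕ) : coeffZ p d = p.coeff d := by
  simp [coeffZ]

theorem coeffZ_of_neg (p : ℂ[X]) {m : ℤ} (hm : m < 0) : coeffZ p m = 0 :=
  if_neg hm.not_ge

theorem coeffZ_of_natDegree_lt {p : ℂ[X]} {m : ℤ} (hm : p.natDegree < m) : coeffZ p m = 0 := by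
  lift m to ℕ using by omega
  rw [coeffZ_natCast, coeff_eq_zero_of_natDegree_lt (by exact_mod_cast hm)]

theorem coeffZ_mul (p q : ℂ[X]) (m : ℤ) :
    coeffZ (p * q) m = ∑' a : ℕ, p.coeff a * coeffZ q (m - a) := by
  rcases lt_or_ge m 0 with hm | hm
  · have vanish (a : ℕ) : coeffZ q (m - a) = 0 := coeffZ_of_neg q (by omega)
    simp [coeffZ_of_neg, hm, vanish]
  · lift m to ℕ using hm
    rw [coeffZ_natCast, coeff_mul, Nat.sum_antidiagonal_eq_sum_range_succ_mk,
      tsum_eq_sum fun a ha => ?_]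
    · refine sum_congr rfl fun a ha => ?_
      rw [← Nat.cast_sub (Nat.lt_succ_iff.1 (mem_range.1 ha)), coeffZ_natCast]
    · rw [mem_range] at ha
      rw [coeffZ_of_neg q (by omega), mul_zero]

theorem coeffZ_reverse (p : ℂ[X]) (m : ℤ) : coeffZ p.reverse (p.natDegree - m) = coeffZ p m := by
  rcases lt_or_ge m 0 with hm | hm
  · rw [coeffZ_of_neg p hm, coeffZ_of_natDegree_lt]
    have := p.reverse_natDegree_le
    omega
  · lift m to ℕ using hm
    rcases lt_or_ge p.natDegree m with h | h
    · rw [coeffZ_of_neg p.reverse (by omega), coeffZ_of_natDegree_lt (by exact_mod_cast h)]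
    · rw [← Nat.cast_sub h, coeffZ_natCast, coeffZ_natCast, coeff_reverse,
        revAt_le (Nat.sub_le _ _), Nat.sub_sub_self h]

theorem sum_coeff_smul_shiftMatrix (l N : ℕ) (p : ℂ[X]) :
    ∑ a ∈ range (p.natDegree + 1), p.coeff a • shiftMatrix ℂ l (a - N) =
      of fun j k : Fin l => coeffZ p (N + k - j) := by
  ext j k
  have index_iff (a : ℕ) : (k : ℤ) - j = a - N ↔ (N + k - j : ℤ) = a := by omega
  simp only [Matrix.sum_apply, Matrix.smul_apply, shiftMatrix, of_apply, smul_eq_mul, mul_ite,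
    mul_one, mul_zero, index_iff]
  generalize (N + k - j : ℤ) = m
  rcases lt_or_ge m 0 with hm | hm
  · rw [coeffZ_of_neg p hm]
    exact sum_eq_zero fun a _ => if_neg (by omega)
  · lift m to ℕ using hm
    simp only [Nat.cast_inj, coeffZ_natCast, sum_ite_eq, mem_range, Nat.lt_succ_iff]
    exact ite_eq_left_iff.2 fun h => (coeff_eq_zero_of_natDegree_lt (not_le.1 h)).symm

theorem pow_natDegree_mul_aeval {R A : Type*} [CommSemiring R] [Semiring A] [Algebra R A]
    {a b : A} (hab : a * b = 1) (p : R[X]) :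
    a ^ p.natDegree * aeval b p = aeval a p.reverse := by
  rw [aeval_eq_sum_range' (Nat.lt_succ_of_le p.reverse_natDegree_le), aeval_eq_sum_range,
    ← sum_range_reflect, mul_sum]
  refine sum_congr rfl fun c hc => ?_
  have hc : c ≤ p.natDegree := Nat.lt_succ_iff.1 (mem_range.1 hc)
  have cancel : a ^ p.natDegree * b ^ (p.natDegree - c) = a ^ c := by
    conv_lhs => rw [← Nat.add_sub_of_le hc, pow_add, Nat.add_sub_cancel_left]
    rw [mul_assoc, pow_mul_pow_eq_one (p.natDegree - c) hab, mul_one]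
  rw [Nat.add_sub_cancel, mul_smul_comm, coeff_reverse, revAt_le hc, cancel]

end Coefficients

section ToeplitzDeterminant

open Finset Polynomial

theorem det_aeval_conjTranspose {n : Type*} [Fintype n] [DecidableEq n] (U : unitaryGroup n ℂ)
    (p : ℂ[X]) :
    (aeval ((U : Matrix n n ℂ)ᴴ) p).det =
      star (U : Matrix n n ℂ).det ^ p.natDegree * (aeval (U : Matrix n n ℂ) p.reverse).det := by
  rw [← pow_natDegree_mul_aeval (mem_unitaryGroup_iff.1 U.2), det_mul, det_pow, ← mul_assoc,
    ← mul_pow, star_det_mul_det, one_pow, one_mul, star_eq_conjTranspose]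

theorem integral_star_det_pow_mul_det_aeval {l : ℕ} [MeasurableSpace (unitaryGroup (Fin l) ℂ)]
    [BorelSpace (unitaryGroup (Fin l) ℂ)] (μ : Measure (unitaryGroup (Fin l) ℂ))
    [IsProbabilityMeasure μ] [μ.IsMulLeftInvariant] (N : ℕ) (p : ℂ[X]) :
    ∫ U : unitaryGroup (Fin l) ℂ, star (U : Matrix (Fin l) (Fin l) ℂ).det ^ N *
        (aeval (U : Matrix (Fin l) (Fin l) ℂ) p).det ∂μ =
      det (of fun j k : Fin l => coeffZ p (N + k - j)) := by
  refine mul_left_cancel₀ (Nat.cast_ne_zero.2 (Fintype.card (Fin l)).factorial_ne_zero) ?_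
  have expansion (U : Matrix (Fin l) (Fin l) ℂ) :
      ((Fintype.card (Fin l)).factorial : ℂ) * (star U.det ^ N * (aeval U p).det) =
        ∑ a ∈ Fintype.piFinset fun _ => range (p.natDegree + 1),
          (∏ k, p.coeff (a k)) * (star U.det ^ N * mixedDet fun k => U ^ a k) := by
    simp only [aeval_eq_sum_range, mul_left_comm _ (star U.det ^ N),
      factorial_mul_det_sum_smul _ _ (U ^ ·), mul_sum]
  rw [← sum_coeff_smul_shiftMatrix, factorial_mul_det_sum_smul, ← integral_const_mul]
  simp only [expansion]
  rw [integral_finsetSum _ fun a _ =>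
    (integrable_star_det_pow_mul_mixedDet_pow μ N a).const_mul _]
  refine sum_congr rfl fun a _ => ?_
  rw [integral_const_mul, ← haarMixedDet_eq_mixedDet_shiftMatrix μ, haarMixedDet]

end ToeplitzDeterminant

/-- For polynomials `f`, `g` and `l > 0`,
`E_{U∈U(l)} det(f(U))·det(g(U*)) = det_{0≤j,k<l} ( Σ_{a≥0} f_a · g_{a+j−k} )`,
a Toeplitz determinant (coefficients of `g` at negative indices are `0`). -/
theorem unitary_integral_eq_toeplitz_det (l : ℕ) (hl : 0 < l)
    (f g : Polynomial ℂ)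
    (μ : Measure (Matrix.unitaryGroup (Fin l) ℂ))
    [μ.IsHaarMeasure] [IsProbabilityMeasure μ] :
    ∫ U, (Polynomial.aeval (U : Matrix (Fin l) (Fin l) ℂ) f).det *
        (Polynomial.aeval ((U : Matrix (Fin l) (Fin l) ℂ)ᴴ) g).det ∂μ =
      Matrix.det (Matrix.of fun j k : Fin l =>
        ∑' a : ℕ, f.coeff a * coeffZ g ((a : ℤ) + (j : ℕ) - (k : ℕ))) := by
  simp only [det_aeval_conjTranspose, mul_left_comm, ← det_mul, ← map_mul]
  rw [integral_star_det_pow_mul_det_aeval]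
  congr! 4 with j k
  rw [coeffZ_mul]
  refine tsum_congr fun a => ?_
  rw [← coeffZ_reverse g]
  congr 2
  ring
end
end

section
/- For every nonnegative integer l and every real t, Σ_{n≥0} f_{n,l} · t^{2n}/(n!)² = det_{0≤j,k<l} ( I_{j−k}(2t) ); that is, the generating function of the numbers of permutations of {1,…,n} with longest increasing subsequence of length at most l equals the l×l Toeplitz determinant of modified Bessel functions. -/
/-!
Fomin's growth diagrams on Young's lattice realise the Robinson–Schensted correspondence: filling
the cells of an `n × n` grid by a local rule identifies the permutations of `n` letters with the
pairs of saturated chains from `⊥` to a common diagram of size `n`. The rule that bumps a cell from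
row `i` to row `i + 1` makes the first row of a corner record the longest increasing subsequence
below it, so `f_{n,l}` is the sum of the squared numbers of chains over the diagrams with at most
`l` columns.

Such a diagram is encoded by `l` increasing natural numbers `f₀ < ⋯ < f_{l-1}`, its beta numbers,
and the number of chains is `n!` times the determinant of the `1 / (f_i - j)!` (Aitken's formula):
both sides satisfy the recursion that removes a cell, since the removals that do not lead to a
diagram create a negative or a repeated `f_i`. Squaring and summing over all increasing `f`, the
Cauchy–Binet formula gives the Gram determinant with entries
`∑ₘ t ^ (m - j) / (m - j)! * t ^ (m - k) / (m - k)!`, which are Bessel functions.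
-/

noncomputable section

/-- `lisLE π l` means the longest increasing subsequence of the permutation `π`
has length at most `l`. -/
def lisLE {N : ℕ} (π : Equiv.Perm (Fin N)) (l : ℕ) : Prop :=
  ∀ (k : ℕ) (f : Fin k → Fin N), StrictMono f → StrictMono (fun i => π (f i)) → k ≤ l

/-- `f_{n,l}`: the number of permutations of `{1,…,n}` whose longest increasing
subsequence has length at most `l`. -/
def permCount (n l : ℕ) : ℕ :=
  Nat.card {π : Equiv.Perm (Fin n) // lisLE π l}

/-- The modified Bessel function of the first kind:
`besselI j t = I_j(2t) = Σ_{m≥0} t^{2m+|j|}/(m!·(m+|j|)!)`. -/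
def besselI (j : ℤ) (t : ℝ) : ℝ :=
  ∑' m : ℕ, t ^ (2 * m + j.natAbs) /
    ((Nat.factorial m : ℝ) * (Nat.factorial (m + j.natAbs) : ℝ))

section LocalRules

/-- Fomin's local datum for Robinson–Schensted correspondences on a graded lattice `L`: the upper
covers of each element are matched with its lower covers and one additional symbol `none`. -/
abbrev CoverCorrespondence (L : Type*) [Preorder L] :=
  ∀ μ : L, Option {ρ // ρ ⋖ μ} ≃ {κ // μ ⋖ κ}

variable {L : Type*} [Lattice L]

/-- Fomin's local growth rule for a unit cell with corners `ρ` (bottom), `μ` and `ν` (sides) and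
`κ` (top); the proposition `x` says that the cell carries a mark. -/
inductive Growth (Φ : CoverCorrespondence L) (x : Prop) : L → L → L → L → Prop
  | diamond {μ ν : L} (hx : ¬x) (hne : μ ≠ ν) (hμ : μ ⊓ ν ⩿ μ) (hν : μ ⊓ ν ⩿ ν) :
      Growth Φ x (μ ⊓ ν) μ ν (μ ⊔ ν)
  | const (hx : ¬x) (ρ : L) : Growth Φ x ρ ρ ρ ρ
  | mark (hx : x) (ρ : L) : Growth Φ x ρ ρ ρ (Φ ρ none)
  | bump (hx : ¬x) {μ : L} (ρ : {ρ // ρ ⋖ μ}) : Growth Φ x ρ μ μ (Φ μ (some ρ))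

open Classical in
/-- The top corner of a cell, determined by its other corners and its mark; this is the forward
local rule. -/
def topCorner (Φ : CoverCorrespondence L) (x : Prop) (ρ μ ν : L) : L :=
  if μ ≠ ν then μ ⊔ ν
  else if h : ρ ⋖ μ then Φ μ (some ⟨ρ, h⟩)
  else if x then Φ μ none
  else μ

open Classical in
/-- The bottom corner of a cell, determined by its other corners; this is the backward local
rule. -/
def bottomCorner (Φ : CoverCorrespondence L) (μ ν κ : L) : L :=
  if μ ≠ ν then μ ⊓ ν
  else if h : μ ⋖ κ then ((Φ μ).symm ⟨κ, h⟩).elim μ Subtype.val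
  else μ

variable {Φ : CoverCorrespondence L} {x : Prop} {ρ μ ν κ : L}

theorem Growth.swap (h : Growth Φ x ρ μ ν κ) : Growth Φ x ρ ν μ κ := by
  cases h with
  | diamond hx hne hμ hν =>
    rw [inf_comm] at hμ hν ⊢
    rw [sup_comm]
    exact .diamond hx hne.symm hν hμ
  | const hx => exact .const hx _
  | mark hx => exact .mark hx _
  | bump hx σ => exact .bump hx σ

theorem Growth.bottom_wcovBy_left (h : Growth Φ x ρ μ ν κ) : ρ ⩿ μ := by
  cases h with
  | diamond _ _ hμ _ => exact hμ
  | const | mark => exact .refl _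
  | bump _ σ => exact σ.2.wcovBy

theorem Growth.bottom_wcovBy_right (h : Growth Φ x ρ μ ν κ) : ρ ⩿ ν :=
  h.swap.bottom_wcovBy_left

theorem Growth.eq_of_mark (h : Growth Φ x ρ μ ν κ) (hx : x) : ρ = μ ∧ ρ = ν := by
  cases h with
  | diamond hx' | const hx' | bump hx' => exact absurd hx hx'
  | mark => exact ⟨rfl, rfl⟩

theorem Growth.right_eq_top_iff (h : Growth Φ x ρ μ ν κ) : ν = κ ↔ ρ = μ ∧ ¬x := by
  cases h with
  | diamond hx => simp [hx]
  | const hx => simp [hx]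
  | mark hx => simpa [hx] using (Φ _ none).2.ne
  | bump hx σ => simpa [hx, σ.2.ne] using (Φ _ (some σ)).2.ne

theorem Growth.left_eq_top_iff (h : Growth Φ x ρ μ ν κ) : μ = κ ↔ ρ = ν ∧ ¬x :=
  h.swap.right_eq_top_iff

theorem Growth.eq_topCorner (h : Growth Φ x ρ μ ν κ) : κ = topCorner Φ x ρ μ ν := by
  cases h with
  | diamond hx hne => simp [topCorner, hne]
  | const hx => simp [topCorner, hx]
  | mark hx => simp [topCorner, hx]
  | bump hx σ => simp [topCorner, σ.2]

theorem Growth.eq_bottomCorner (h : Growth Φ x ρ μ ν κ) : ρ = bottomCorner Φ μ ν κ := by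
  cases h with
  | diamond hx hne => simp [bottomCorner, hne]
  | const hx => simp [bottomCorner]
  | mark hx => simp [bottomCorner]
  | bump hx σ => simp [bottomCorner, (Φ μ (some σ)).2]

theorem Growth.mark_iff (h : Growth Φ x ρ μ ν κ) : x ↔ μ = ν ∧ κ = Φ μ none := by
  cases h with
  | diamond hx hne => simp [hx, hne]
  | const hx => simpa [hx] using (Φ ρ none).2.ne
  | mark hx => simp [hx]
  | bump hx σ => simp [hx, Subtype.val_inj]

theorem growth_topCorner (hμ : ρ ⩿ μ) (hν : ρ ⩿ ν) (hx : x → ρ = μ ∧ ρ = ν) :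
    Growth Φ x ρ μ ν (topCorner Φ x ρ μ ν) := by
  by_cases hne : μ = ν
  · subst hne
    obtain rfl | hcov := hμ.eq_or_covBy
    · by_cases hx : x
      · simpa [topCorner, hx] using Growth.mark hx ρ
      · simpa [topCorner, hx] using Growth.const (Φ := Φ) hx ρ
    · have hx : ¬x := fun h => hcov.ne (hx h).1
      simpa [topCorner, hcov] using Growth.bump hx ⟨ρ, hcov⟩
  · have hunmarked : ¬x := fun h => hne ((hx h).1.symm.trans (hx h).2)
    obtain rfl : μ ⊓ ν = ρ := hμ.inf_eq hν hne
    simpa [topCorner, hne] using .diamond hunmarked hne hμ hν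

variable [IsModularLattice L]

theorem inf_wcovBy_left_of_wcovBy_sup (h : ν ⩿ μ ⊔ ν) : μ ⊓ ν ⩿ μ := by
  obtain h | h := h.eq_or_covBy
  · exact (inf_eq_left.2 (right_eq_sup.1 h)).wcovBy
  · exact (inf_covBy_of_covBy_sup_right h).wcovBy

theorem inf_wcovBy_right_of_wcovBy_sup (h : μ ⩿ μ ⊔ ν) : μ ⊓ ν ⩿ ν := by
  rw [sup_comm] at h
  simpa only [inf_comm] using inf_wcovBy_left_of_wcovBy_sup h

theorem Growth.right_wcovBy_top (h : Growth Φ x ρ μ ν κ) : ν ⩿ κ := by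
  cases h with
  | diamond hx hne hμ =>
    obtain h | h := hμ.eq_or_covBy
    · exact (sup_eq_right.2 (inf_eq_left.1 h)).symm.wcovBy
    · exact (covBy_sup_of_inf_covBy_left h).wcovBy
  | const => exact .refl _
  | mark => exact (Φ _ none).2.wcovBy
  | bump _ σ => exact (Φ _ (some σ)).2.wcovBy

theorem growth_bottomCorner (hμ : μ ⩿ κ) (hν : ν ⩿ κ) :
    Growth Φ (μ = ν ∧ κ = Φ μ none) (bottomCorner Φ μ ν κ) μ ν κ := by
  by_cases hne : μ = ν
  · subst hne
    obtain rfl | hcov := hμ.eq_or_covBy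
    · simpa [bottomCorner] using Growth.const (Φ := Φ) (by simpa using (Φ μ none).2.ne) μ
    obtain ⟨_ | σ, hσ⟩ := (Φ μ).surjective ⟨κ, hcov⟩
    · obtain rfl : (Φ μ none : L) = κ := congrArg Subtype.val hσ
      simpa [bottomCorner, hcov] using Growth.mark trivial μ
    · obtain rfl : (Φ μ (some σ) : L) = κ := congrArg Subtype.val hσ
      simpa [bottomCorner, hcov] using
        Growth.bump (x := μ = μ ∧ (Φ μ (some σ) : L) = Φ μ none) (by simp [Subtype.val_inj]) σ
  · obtain rfl : μ ⊔ ν = κ := hμ.sup_eq hν hne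
    have hx : ¬(μ = ν ∧ μ ⊔ ν = Φ μ none) := fun h => hne h.1
    simpa only [bottomCorner, if_pos hne] using
      .diamond hx hne (inf_wcovBy_left_of_wcovBy_sup hν) (inf_wcovBy_right_of_wcovBy_sup hμ)

end LocalRules

section GrowthDiagrams

variable {L : Type*} [Lattice L] {m n : ℕ}

/-- The row of a growth diagram preceding the row `s`, computed from its last entry `ρ`. -/
def prevRow (Φ : CoverCorrespondence L) (s : Fin (m + 1) → L) (ρ : L) : Fin (m + 1) → L :=
  Fin.reverseInduction ρ fun j ν => bottomCorner Φ (s j.castSucc) ν (s j.succ)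

/-- The growth diagram with last column `p` and last row `q`. -/
def reverseDiagram (Φ : CoverCorrespondence L) (p : Fin (n + 1) → L) (q : Fin (m + 1) → L) :
    Fin (n + 1) → Fin (m + 1) → L :=
  Fin.reverseInduction q fun i s => prevRow Φ s (p i.castSucc)

@[simp]
theorem reverseDiagram_last (Φ : CoverCorrespondence L) (p : Fin (n + 1) → L)
    (q : Fin (m + 1) → L) : reverseDiagram Φ p q (Fin.last n) = q := by
  simp [reverseDiagram]

theorem reverseDiagram_last_right {Φ : CoverCorrespondence L} {p : Fin (n + 1) → L}
    {q : Fin (m + 1) → L} (hpq : p (Fin.last n) = q (Fin.last m)) (i : Fin (n + 1)) :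
    reverseDiagram Φ p q i (Fin.last m) = p i := by
  cases i using Fin.lastCases with
  | last => rw [reverseDiagram_last, hpq]
  | cast i => simp [reverseDiagram, prevRow]

section Reverse

variable [IsModularLattice L] {Φ : CoverCorrespondence L}

theorem growth_prevRow {s : Fin (m + 1) → L} {ρ : L} (hs : ∀ j : Fin m, s j.castSucc ⩿ s j.succ)
    (hρ : ρ ⩿ s (Fin.last m)) (j : Fin m) :
    Growth Φ (s j.castSucc = prevRow Φ s ρ j.succ ∧ s j.succ = Φ (s j.castSucc) none)
      (prevRow Φ s ρ j.castSucc) (s j.castSucc) (prevRow Φ s ρ j.succ) (s j.succ) := by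
  have cell (j : Fin m) (hcov : prevRow Φ s ρ j.succ ⩿ s j.succ) :
      Growth Φ (s j.castSucc = prevRow Φ s ρ j.succ ∧ s j.succ = Φ (s j.castSucc) none)
        (prevRow Φ s ρ j.castSucc) (s j.castSucc) (prevRow Φ s ρ j.succ) (s j.succ) := by
    simpa [prevRow] using growth_bottomCorner (Φ := Φ) (hs j) hcov
  have row (j : Fin (m + 1)) : prevRow Φ s ρ j ⩿ s j := by
    induction j using Fin.reverseInduction with
    | last => simpa [prevRow] using hρ
    | cast j ih => exact (cell j ih).bottom_wcovBy_left
  exact cell j (row _)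

theorem growth_reverseDiagram {p : Fin (n + 1) → L} {q : Fin (m + 1) → L}
    (hp : ∀ i : Fin n, p i.castSucc ⩿ p i.succ) (hq : ∀ j : Fin m, q j.castSucc ⩿ q j.succ)
    (hpq : p (Fin.last n) = q (Fin.last m)) (i : Fin n) (j : Fin m) :
    let G := reverseDiagram Φ p q
    Growth Φ (G i.succ j.castSucc = G i.castSucc j.succ ∧
        G i.succ j.succ = Φ (G i.succ j.castSucc) none)
      (G i.castSucc j.castSucc) (G i.succ j.castSucc) (G i.castSucc j.succ) (G i.succ j.succ) := by
  intro G
  have hcast (i : Fin n) : G i.castSucc = prevRow Φ (G i.succ) (p i.castSucc) := by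
    simp [G, reverseDiagram]
  have cell (i : Fin n) (hs : ∀ j : Fin m, G i.succ j.castSucc ⩿ G i.succ j.succ) (j : Fin m) :=
    growth_prevRow (Φ := Φ) hs (reverseDiagram_last_right (Φ := Φ) hpq i.succ ▸ hp i) j
  have rows (i : Fin (n + 1)) (j : Fin m) : G i j.castSucc ⩿ G i j.succ := by
    induction i using Fin.reverseInduction generalizing j with
    | last => simpa [G] using hq j
    | cast i ih => exact hcast i ▸ (cell i ih j).bottom_wcovBy_right
  exact hcast i ▸ cell i (rows i.succ) j

end Reverse

variable [OrderBot L]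

/-- `G` is a growth diagram on the `n × m` grid with marked cells `x`: its left and bottom borders
are `⊥` and every cell obeys the local rule. -/
structure IsGrowthDiagram (Φ : CoverCorrespondence L) (x : Fin n → Fin m → Prop)
    (G : Fin (n + 1) → Fin (m + 1) → L) : Prop where
  zero_left : ∀ j, G 0 j = ⊥
  zero_right : ∀ i, G i 0 = ⊥
  growth : ∀ i j, Growth Φ (x i j) (G i.castSucc j.castSucc) (G i.succ j.castSucc)
    (G i.castSucc j.succ) (G i.succ j.succ)

/-- The row of a growth diagram following the row `r`, where `x` marks the cells in between. -/
def nextRow (Φ : CoverCorrespondence L) (x : Fin m → Prop) (r : Fin (m + 1) → L) :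
    Fin (m + 1) → L :=
  Fin.induction ⊥ fun j μ => topCorner Φ (x j) (r j.castSucc) μ (r j.succ)

/-- The growth diagram with marked cells `x`, computed from its left and bottom borders. -/
def growthDiagram (Φ : CoverCorrespondence L) (x : Fin n → Fin m → Prop) :
    Fin (n + 1) → Fin (m + 1) → L :=
  Fin.induction (fun _ => ⊥) fun i r => nextRow Φ (x i) r

variable {Φ : CoverCorrespondence L} {x y : Fin n → Fin m → Prop}
  {G H : Fin (n + 1) → Fin (m + 1) → L}

namespace IsGrowthDiagram

theorem swap (h : IsGrowthDiagram Φ x G) :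
    IsGrowthDiagram Φ (fun j i => x i j) (fun j i => G i j) :=
  ⟨h.zero_right, h.zero_left, fun j i => (h.growth i j).swap⟩

theorem eq_growthDiagram (h : IsGrowthDiagram Φ x G) : G = growthDiagram Φ x := by
  funext i
  induction i using Fin.induction with
  | zero => exact funext h.zero_left
  | succ i ihi =>
    funext j
    induction j using Fin.induction with
    | zero => exact h.zero_right _
    | succ j ihj =>
      rw [(h.growth i j).eq_topCorner, ihj, ihi]
      rfl

theorem eq_reverseDiagram (h : IsGrowthDiagram Φ x G) :
    G = reverseDiagram Φ (fun i => G i (Fin.last m)) (G (Fin.last n)) := by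
  funext i
  induction i using Fin.reverseInduction with
  | last => simp [reverseDiagram]
  | cast i ihi =>
    funext j
    induction j using Fin.reverseInduction with
    | last => simp [reverseDiagram, prevRow]
    | cast j ihj =>
      rw [(h.growth i j).eq_bottomCorner, ihj, ihi]
      simp [reverseDiagram, prevRow]

theorem eq_of_last_eq (hG : IsGrowthDiagram Φ x G) (hH : IsGrowthDiagram Φ y H)
    (hcol : ∀ i, G i (Fin.last m) = H i (Fin.last m)) (hrow : G (Fin.last n) = H (Fin.last n)) :
    x = y := by
  obtain rfl : G = H := by
    rw [hG.eq_reverseDiagram, hH.eq_reverseDiagram, funext hcol, hrow]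
  ext i j
  rw [(hG.growth i j).mark_iff, (hH.growth i j).mark_iff]

theorem eq_row_iff (h : IsGrowthDiagram Φ x G) (i : Fin n) (j : Fin (m + 1)) :
    G i.castSucc j = G i.succ j ↔ ∀ k : Fin m, k.castSucc < j → ¬x i k := by
  induction j using Fin.induction with
  | zero => simp [h.zero_right]
  | succ j ih =>
    rw [(h.growth i j).right_eq_top_iff, ih]
    simp only [Fin.castSucc_lt_castSucc_iff, Fin.castSucc_lt_succ_iff, le_iff_lt_or_eq, or_imp,
      forall_and, forall_eq]

theorem mark_unique_row (h : IsGrowthDiagram Φ x G) {i : Fin n} {j k : Fin m} (hj : x i j)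
    (hk : x i k) : j = k := by
  by_contra hne
  wlog hlt : j < k generalizing j k
  · exact this hk hj (Ne.symm hne) (by omega)
  exact (h.eq_row_iff i k.castSucc).1 ((h.growth i k).eq_of_mark hk).1 j
    (Fin.castSucc_lt_castSucc_iff.2 hlt) hj

theorem mark_unique_column (h : IsGrowthDiagram Φ x G) {i k : Fin n} {j : Fin m} (hi : x i j)
    (hk : x k j) : i = k :=
  h.swap.mark_unique_row hi hk

variable [IsModularLattice L]

theorem wcovBy_row (h : IsGrowthDiagram Φ x G) (i : Fin n) (j : Fin (m + 1)) :
    G i.castSucc j ⩿ G i.succ j := by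
  cases j using Fin.cases with
  | zero => exact (h.zero_right _).trans (h.zero_right _).symm |>.wcovBy
  | succ j => exact (h.growth i j).right_wcovBy_top

theorem covBy_row_last_iff (h : IsGrowthDiagram Φ x G) (i : Fin n) :
    G i.castSucc (Fin.last m) ⋖ G i.succ (Fin.last m) ↔ ∃ j, x i j := by
  simp [covBy_iff_wcovBy_and_ne, h.wcovBy_row, h.eq_row_iff, Fin.castSucc_lt_last]

theorem covBy_column_last_iff (h : IsGrowthDiagram Φ x G) (j : Fin m) :
    G (Fin.last n) j.castSucc ⋖ G (Fin.last n) j.succ ↔ ∃ i, x i j :=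
  h.swap.covBy_row_last_iff j

end IsGrowthDiagram

section Existence

variable [IsModularLattice L]

theorem growth_nextRow {x : Fin m → Prop} {r : Fin (m + 1) → L} (h0 : r 0 = ⊥)
    (hr : ∀ j : Fin m, r j.castSucc ⩿ r j.succ) (hx : ∀ j, x j → r j.castSucc = r j.succ)
    (hunique : ∀ j k, x j → x k → j = k) (j : Fin m) :
    Growth Φ (x j) (r j.castSucc) (nextRow Φ x r j.castSucc) (r j.succ)
      (nextRow Φ x r j.succ) := by
  have cell (j : Fin m) (hcov : r j.castSucc ⩿ nextRow Φ x r j.castSucc)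
      (heq : (∀ k : Fin m, k.castSucc < j.castSucc → ¬x k) →
        r j.castSucc = nextRow Φ x r j.castSucc) :=
    growth_topCorner (Φ := Φ) (x := x j) hcov (hr j) fun hj =>
      ⟨heq fun k hk hxk => hk.ne (congrArg _ (hunique k j hxk hj)), hx j hj⟩
  have row (j : Fin (m + 1)) : r j ⩿ nextRow Φ x r j ∧
      ((∀ k : Fin m, k.castSucc < j → ¬x k) → r j = nextRow Φ x r j) := by
    induction j using Fin.induction with
    | zero => simp [nextRow, h0]
    | succ j ih =>
      have hcell := cell j ih.1 ih.2
      refine ⟨hcell.right_wcovBy_top, fun hmark => hcell.right_eq_top_iff.2 ⟨ih.2 ?_, ?_⟩⟩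
      · exact fun k hk => hmark k (hk.trans Fin.castSucc_lt_succ)
      · exact hmark j Fin.castSucc_lt_succ
  exact cell j (row _).1 (row _).2

theorem isGrowthDiagram_growthDiagram (hrow : ∀ i j k, x i j → x i k → j = k)
    (hcol : ∀ i k j, x i j → x k j → i = k) : IsGrowthDiagram Φ x (growthDiagram Φ x) := by
  set G := growthDiagram Φ x
  have hzero (i : Fin (n + 1)) : G i 0 = ⊥ := by
    cases i using Fin.cases <;> rfl
  have growth_of (i : Fin n) (hcov : ∀ j : Fin m, G i.castSucc j.castSucc ⩿ G i.castSucc j.succ)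
      (heq : ∀ j : Fin m, (∀ k : Fin n, k.castSucc < i.castSucc → ¬x k j) →
        G i.castSucc j.castSucc = G i.castSucc j.succ) :=
    growth_nextRow (Φ := Φ) (x := x i) (hzero _) hcov
      (fun j hj => heq j fun k hk hxk => hk.ne (congrArg _ (hcol k i j hxk hj))) (hrow i)
  have rows (i : Fin (n + 1)) (j : Fin m) : G i j.castSucc ⩿ G i j.succ ∧
      ((∀ k : Fin n, k.castSucc < i → ¬x k j) → G i j.castSucc = G i j.succ) := by
    induction i using Fin.induction generalizing j with
    | zero => exact ⟨.refl _, fun _ => rfl⟩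
    | succ i ih =>
      have hcell := growth_of i (fun j => (ih j).1) (fun j => (ih j).2) j
      refine ⟨hcell.swap.right_wcovBy_top, fun hmark => hcell.left_eq_top_iff.2 ⟨(ih j).2 ?_, ?_⟩⟩
      · exact fun k hk => hmark k (hk.trans Fin.castSucc_lt_succ)
      · exact hmark i Fin.castSucc_lt_succ
  exact ⟨fun _ => rfl, hzero, fun i => growth_of i (fun j => (rows _ j).1) fun j => (rows _ j).2⟩

theorem exists_isGrowthDiagram {p : Fin (n + 1) → L} {q : Fin (m + 1) → L} (hp0 : p 0 = ⊥)
    (hq0 : q 0 = ⊥) (hp : ∀ i : Fin n, p i.castSucc ⩿ p i.succ)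
    (hq : ∀ j : Fin m, q j.castSucc ⩿ q j.succ) (hpq : p (Fin.last n) = q (Fin.last m)) :
    ∃ x G, IsGrowthDiagram Φ x G ∧ (∀ i, G i (Fin.last m) = p i) ∧ G (Fin.last n) = q := by
  set G := reverseDiagram Φ p q
  have hlast : G (Fin.last n) = q := reverseDiagram_last ..
  have hcol (i : Fin (n + 1)) : G i (Fin.last m) = p i := reverseDiagram_last_right hpq i
  have growth := growth_reverseDiagram (Φ := Φ) hp hq hpq
  have hmono (j : Fin (m + 1)) : Monotone fun i => G i j := by
    refine Fin.monotone_iff_le_succ.2 fun i => ?_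
    cases j using Fin.lastCases with
    | last => simpa only [hcol] using (hp i).le
    | cast j => exact (growth i j).bottom_wcovBy_left.le
  have hmono_zero : Monotone (G 0) := by
    refine Fin.monotone_iff_le_succ.2 fun j => ?_
    cases n with
    | zero => exact hlast ▸ (hq j).le
    | succ n => exact (growth 0 j).bottom_wcovBy_right.le
  refine ⟨_, G, ⟨fun j => ?_, fun i => ?_, growth⟩, hcol, hlast⟩
  · exact le_bot_iff.1 ((hmono_zero (Fin.le_last j)).trans_eq ((hcol 0).trans hp0))
  · exact le_bot_iff.1 ((hmono 0 (Fin.le_last i)).trans_eq (hq0 ▸ congrFun hlast 0))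

end Existence

end GrowthDiagrams

section SaturatedChains

variable {L : Type*} [Preorder L] [OrderBot L] {n : ℕ} {μ ρ : L}

/-- The saturated chains of length `n` from `⊥` to `μ`; in Young's lattice these are the standard
Young tableaux of shape `μ`. -/
def SaturatedChain (n : ℕ) (μ : L) : Type _ :=
  {p : Fin (n + 1) → L //
    p 0 = ⊥ ∧ (∀ i : Fin n, p i.castSucc ⋖ p i.succ) ∧ p (Fin.last n) = μ}

namespace SaturatedChain

instance : Subsingleton (SaturatedChain 0 μ) where
  allEq p q := Subtype.ext <| funext fun i => by
    rw [Fin.fin_one_eq_zero i]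
    exact p.2.1.trans q.2.1.symm

instance : Unique (SaturatedChain 0 (⊥ : L)) :=
  uniqueOfSubsingleton ⟨fun _ => ⊥, rfl, fun i => i.elim0, rfl⟩

theorem isEmpty_zero (hμ : μ ≠ ⊥) : IsEmpty (SaturatedChain 0 μ) :=
  ⟨fun p => hμ (p.2.2.2.symm.trans p.2.1)⟩

/-- The extension of a saturated chain by a cover of its top. -/
def snoc (h : ρ ⋖ μ) (p : SaturatedChain n ρ) : SaturatedChain (n + 1) μ :=
  ⟨Fin.snoc (α := fun _ => L) p.1 μ, (Fin.snoc_castSucc (α := fun _ => L) μ p.1 0).trans p.2.1,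
    fun i => by
      cases i using Fin.lastCases with
      | last => simpa [p.2.2.2] using h
      | cast i => simpa only [← Fin.castSucc_succ, Fin.snoc_castSucc] using p.2.2.1 i,
    Fin.snoc_last _ _⟩

theorem snoc_bijective (n : ℕ) (μ : L) :
    Function.Bijective fun q : Σ ρ : {ρ // ρ ⋖ μ}, SaturatedChain n (ρ : L) => q.2.snoc q.1.2 := by
  constructor
  · rintro ⟨⟨ρ, hρ⟩, p, hp⟩ ⟨⟨ρ', hρ'⟩, p', hp'⟩ h
    obtain rfl : p = p' :=
      (Fin.snoc_injective2 (α := fun _ => L) (congrArg Subtype.val h)).1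
    obtain rfl : ρ = ρ' := hp.2.2.symm.trans hp'.2.2
    rfl
  · rintro ⟨p, hp0, hp, rfl⟩
    exact ⟨⟨⟨_, hp (Fin.last n)⟩, Fin.init p, hp0, fun i => hp i.castSucc, rfl⟩,
      Subtype.ext (Fin.snoc_init_self p)⟩

theorem finite (hfin : ∀ μ : L, Finite {ρ // ρ ⋖ μ}) (n : ℕ) (μ : L) :
    Finite (SaturatedChain n μ) := by
  induction n generalizing μ with
  | zero => infer_instance
  | succ n ih => exact .of_surjective _ (snoc_bijective n μ).2

theorem card_succ (hfin : ∀ μ : L, Finite {ρ // ρ ⋖ μ}) (n : ℕ) (μ : L)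
    [Fintype {ρ // ρ ⋖ μ}] : Nat.card (SaturatedChain (n + 1) μ) =
      ∑ ρ : {ρ // ρ ⋖ μ}, Nat.card (SaturatedChain n (ρ : L)) := by
  have (ρ : L) := finite hfin n ρ
  rw [← Nat.card_sigma, Nat.card_eq_of_bijective _ (snoc_bijective n μ)]

end SaturatedChain

end SaturatedChains

section RobinsonSchensted

variable {L : Type*} [Lattice L] [OrderBot L] {n : ℕ}

/-- The growth diagram of a permutation, whose marks form the graph of the permutation. -/
def permDiagram (Φ : CoverCorrespondence L) (π : Equiv.Perm (Fin n)) :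
    Fin (n + 1) → Fin (n + 1) → L :=
  growthDiagram Φ fun i j => π i = j

/-- The final corner of the growth diagram of a permutation; in Young's lattice this is its
Robinson–Schensted shape. -/
def permShape (Φ : CoverCorrespondence L) (π : Equiv.Perm (Fin n)) : L :=
  permDiagram Φ π (Fin.last n) (Fin.last n)

theorem exists_perm_of_existsUnique {α : Type*} [Finite α] {r : α → α → Prop}
    (hrow : ∀ a, ∃! b, r a b) (hcol : ∀ b, ∃! a, r a b) :
    ∃ π : Equiv.Perm α, r = fun a b => π a = b := by
  choose f hf hf_unique using hrow
  have hinj : f.Injective := fun a b hab =>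
    (hcol (f a)).unique (hf a) (hab ▸ hf b)
  refine ⟨.ofBijective f (Finite.injective_iff_bijective.1 hinj), ?_⟩
  ext a b
  exact ⟨fun hab => (hf_unique a b hab).symm, fun hab => hab ▸ hf a⟩

variable [IsModularLattice L] (Φ : CoverCorrespondence L)

theorem isGrowthDiagram_permDiagram (π : Equiv.Perm (Fin n)) :
    IsGrowthDiagram Φ (fun i j => π i = j) (permDiagram Φ π) :=
  isGrowthDiagram_growthDiagram (fun _ _ _ hj hk => hj.symm.trans hk)
    fun _ _ _ hi hk => π.injective (hi.trans hk.symm)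

theorem perm_eq_of_permDiagram_last_eq {π σ : Equiv.Perm (Fin n)}
    (hcol : ∀ i, permDiagram Φ π i (Fin.last n) = permDiagram Φ σ i (Fin.last n))
    (hrow : permDiagram Φ π (Fin.last n) = permDiagram Φ σ (Fin.last n)) : π = σ := by
  have hmarks := (isGrowthDiagram_permDiagram Φ π).eq_of_last_eq
    (isGrowthDiagram_permDiagram Φ σ) hcol hrow
  ext1 i
  exact (congrFun₂ hmarks i (π i)).mp rfl |>.symm

/-- The recording tableau of a permutation of shape `μ`: the last column of its growth diagram. -/
def recordingChain {π : Equiv.Perm (Fin n)} {μ : L} (hμ : permShape Φ π = μ) :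
    SaturatedChain n μ :=
  have h := isGrowthDiagram_permDiagram Φ π
  ⟨fun i => permDiagram Φ π i (Fin.last n), h.zero_left _,
    fun i => (h.covBy_row_last_iff i).2 ⟨π i, rfl⟩, hμ⟩

/-- The insertion tableau of a permutation of shape `μ`: the last row of its growth diagram. -/
def insertionChain {π : Equiv.Perm (Fin n)} {μ : L} (hμ : permShape Φ π = μ) :
    SaturatedChain n μ :=
  have h := isGrowthDiagram_permDiagram Φ π
  ⟨permDiagram Φ π (Fin.last n), h.zero_right _,
    fun j => (h.covBy_column_last_iff j).2 ⟨π.symm j, π.apply_symm_apply j⟩, hμ⟩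

theorem exists_perm_of_saturatedChain {μ : L} (p q : SaturatedChain n μ) :
    ∃ π : Equiv.Perm (Fin n), (fun i => permDiagram Φ π i (Fin.last n)) = p.1 ∧
      permDiagram Φ π (Fin.last n) = q.1 := by
  obtain ⟨p, hp0, hp, hpμ⟩ := p
  obtain ⟨q, hq0, hq, hqμ⟩ := q
  obtain ⟨x, G, hG, hcol, hrow⟩ := exists_isGrowthDiagram (Φ := Φ) hp0 hq0
    (fun i => (hp i).wcovBy) (fun j => (hq j).wcovBy) (hpμ.trans hqμ.symm)
  obtain ⟨π, rfl⟩ : ∃ π : Equiv.Perm (Fin n), x = fun i j => π i = j := by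
    refine exists_perm_of_existsUnique (fun i => ?_) fun j => ?_
    · obtain ⟨j, hj⟩ := (hG.covBy_row_last_iff i).1 (by simpa only [hcol] using hp i)
      exact ⟨j, hj, fun k hk => hG.mark_unique_row hk hj⟩
    · obtain ⟨i, hi⟩ := (hG.covBy_column_last_iff j).1 (by simpa only [hrow] using hq j)
      exact ⟨i, hi, fun k hk => hG.mark_unique_column hk hi⟩
  obtain rfl : G = permDiagram Φ π := hG.eq_growthDiagram
  exact ⟨π, funext hcol, hrow⟩

theorem card_permShape_eq (n : ℕ) (μ : L) :
    Nat.card {π : Equiv.Perm (Fin n) // permShape Φ π = μ} = Nat.card (SaturatedChain n μ) ^ 2 := by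
  let chains (π : {π : Equiv.Perm (Fin n) // permShape Φ π = μ}) :
      SaturatedChain n μ × SaturatedChain n μ := (recordingChain Φ π.2, insertionChain Φ π.2)
  have hinj : chains.Injective := by
    rintro ⟨π, hπ⟩ ⟨σ, hσ⟩ heq
    obtain ⟨hcol, hrow⟩ := Prod.mk.inj heq
    exact Subtype.ext <| perm_eq_of_permDiagram_last_eq Φ (congrFun (congrArg Subtype.val hcol))
      (congrArg Subtype.val hrow)
  have hsurj : chains.Surjective := by
    rintro ⟨p, q⟩
    obtain ⟨π, hp, hq⟩ := exists_perm_of_saturatedChain Φ p q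
    have hπ : permShape Φ π = μ := (congrFun hq (Fin.last n)).trans q.2.2.2
    exact ⟨⟨π, hπ⟩, Prod.ext (Subtype.ext hp) (Subtype.ext hq)⟩
  rw [Nat.card_eq_of_bijective chains ⟨hinj, hsurj⟩, Nat.card_prod, sq]

end RobinsonSchensted

section IncreasingSubsequences

variable {L : Type*} [Lattice L] [OrderBot L] {n : ℕ}

/-- A height function compatible with the local growth rule, so that it computes the length of the
longest increasing subsequence of a permutation from its growth diagram (Greene's theorem for a
single row). -/
structure IsIncreasingHeight (Φ : CoverCorrespondence L) (h : L → ℕ) : Prop where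
  map_bot : h ⊥ = 0
  map_sup : ∀ μ ν, h (μ ⊔ ν) = max (h μ) (h ν)
  map_mark : ∀ μ, h (Φ μ none) = h μ + 1
  map_bump : ∀ μ ρ, h (Φ μ (some ρ)) = h μ

/-- The index sets of the increasing subsequences of `π` among the first `i` positions and the
first `j` values. -/
def increasingSets (π : Equiv.Perm (Fin n)) (i j : Fin (n + 1)) : Set (Finset (Fin n)) :=
  {s | StrictMonoOn π s ∧ ∀ a ∈ s, a.castSucc < i ∧ (π a).castSucc < j}

variable {Φ : CoverCorrespondence L} {h : L → ℕ} {π : Equiv.Perm (Fin n)}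

theorem Growth.height_of_mark (hh : IsIncreasingHeight Φ h) {x : Prop} {ρ μ ν κ : L}
    (hg : Growth Φ x ρ μ ν κ) (hx : x) : h κ = h ρ + 1 := by
  cases hg with
  | diamond hx' | const hx' | bump hx' => exact absurd hx hx'
  | mark => exact hh.map_mark _

theorem Growth.height_of_not_mark (hh : IsIncreasingHeight Φ h) {x : Prop} {ρ μ ν κ : L}
    (hg : Growth Φ x ρ μ ν κ) (hx : ¬x) : h κ = max (h μ) (h ν) := by
  cases hg with
  | diamond => exact hh.map_sup _ _
  | const => simp
  | mark hx' => exact absurd hx' hx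
  | bump => simp [hh.map_bump]

theorem increasingSets_mono {i i' j j' : Fin (n + 1)} (hi : i ≤ i') (hj : j ≤ j') :
    increasingSets π i j ⊆ increasingSets π i' j' := fun _ hs =>
  ⟨hs.1, fun a ha => ⟨(hs.2 a ha).1.trans_le hi, (hs.2 a ha).2.trans_le hj⟩⟩

theorem increasingSets_eq_singleton_empty {i j : Fin (n + 1)} (hij : i = 0 ∨ j = 0) :
    increasingSets π i j = {∅} := by
  refine Set.eq_singleton_iff_unique_mem.2 ⟨by simp [increasingSets, StrictMonoOn], fun s hs => ?_⟩
  refine Finset.eq_empty_of_forall_notMem fun a ha => ?_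
  have := hs.2 a ha
  rcases hij with rfl | rfl <;> simp at this

theorem insert_mem_increasingSets {i : Fin n} {s : Finset (Fin n)}
    (hs : s ∈ increasingSets π i.castSucc (π i).castSucc) :
    insert i s ∈ increasingSets π i.succ (π i).succ := by
  obtain ⟨hmono, hlt⟩ := hs
  simp only [Fin.castSucc_lt_castSucc_iff] at hlt
  constructor
  · intro a ha b hb hab
    obtain rfl | has := Finset.mem_insert.1 ha <;> obtain rfl | hbs := Finset.mem_insert.1 hb
    · exact absurd hab (lt_irrefl _)
    · exact absurd hab (hlt b hbs).1.asymm
    · exact (hlt a has).2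
    · exact hmono has hbs hab
  · simpa [Fin.castSucc_lt_succ_iff] using fun a ha => ⟨(hlt a ha).1.le, (hlt a ha).2.le⟩

theorem erase_mem_increasingSets {i : Fin n} {s : Finset (Fin n)}
    (hs : s ∈ increasingSets π i.succ (π i).succ) :
    s.erase i ∈ increasingSets π i.castSucc (π i).castSucc := by
  refine ⟨hs.1.mono (Finset.erase_subset _ _), fun a ha => ?_⟩
  obtain ⟨hne, ha⟩ := Finset.mem_erase.1 ha
  have hle := hs.2 a ha
  simp only [Fin.castSucc_lt_succ_iff] at hle
  exact ⟨hle.1.lt_of_ne hne, hle.2.lt_of_ne (π.injective.ne hne)⟩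

theorem mem_increasingSets_or {i j : Fin n} (hij : π i ≠ j) {s : Finset (Fin n)}
    (hs : s ∈ increasingSets π i.succ j.succ) :
    s ∈ increasingSets π i.succ j.castSucc ∨ s ∈ increasingSets π i.castSucc j.succ := by
  have hle := hs.2
  simp only [Fin.castSucc_lt_succ_iff] at hle
  by_cases hi : i ∈ s
  · refine .inl ⟨hs.1, fun a ha => ⟨(hs.2 a ha).1, ?_⟩⟩
    have hπ : π a ≤ π i := hs.1.monotoneOn ha hi (hle a ha).1
    exact hπ.trans_lt ((hle i hi).2.lt_of_ne hij)
  · refine .inr ⟨hs.1, fun a ha => ⟨(hle a ha).1.lt_of_ne ?_, (hs.2 a ha).2⟩⟩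
    exact ne_of_mem_of_not_mem ha hi

theorem IsGrowthDiagram.isGreatest_card_increasingSets (hh : IsIncreasingHeight Φ h)
    {G : Fin (n + 1) → Fin (n + 1) → L} (hG : IsGrowthDiagram Φ (fun i j => π i = j) G)
    (i j : Fin (n + 1)) : IsGreatest (Finset.card '' increasingSets π i j) (h (G i j)) := by
  induction i using Fin.induction generalizing j with
  | zero => simp [increasingSets_eq_singleton_empty, hG.zero_left, hh.map_bot]
  | succ i ihi =>
  induction j using Fin.induction with
  | zero => simp [increasingSets_eq_singleton_empty, hG.zero_right, hh.map_bot]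
  | succ j ihj =>
  by_cases hij : π i = j
  · subst hij
    rw [(hG.growth i (π i)).height_of_mark hh rfl]
    obtain ⟨⟨s, hs, hcard⟩, hub⟩ := ihi (π i).castSucc
    constructor
    · have hi : i ∉ s := fun hi => lt_irrefl _ (hs.2 i hi).1
      exact ⟨_, insert_mem_increasingSets hs, by rw [Finset.card_insert_of_notMem hi, hcard]⟩
    · rintro _ ⟨t, ht, rfl⟩
      have herase := hub ⟨_, erase_mem_increasingSets ht, rfl⟩
      have := t.pred_card_le_card_erase (a := i)
      omega
  · rw [(hG.growth i j).height_of_not_mark hh hij]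
    have hunion : Finset.card '' increasingSets π i.succ j.succ =
        Finset.card '' increasingSets π i.succ j.castSucc ∪
          Finset.card '' increasingSets π i.castSucc j.succ := by
      rw [← Set.image_union]
      exact congrArg _ <| Set.Subset.antisymm (fun s => mem_increasingSets_or hij) <|
        Set.union_subset (increasingSets_mono le_rfl Fin.castSucc_lt_succ.le)
          (increasingSets_mono Fin.castSucc_lt_succ.le le_rfl)
    exact hunion ▸ ihj.union (ihi _)

theorem lisLE_iff_forall_card_le {l : ℕ} :
    lisLE π l ↔ ∀ s : Finset (Fin n), StrictMonoOn π s → s.card ≤ l := by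
  constructor
  · intro hπ s hs
    exact hπ s.card (s.orderEmbOfFin rfl) (s.orderEmbOfFin rfl).strictMono fun a b hab =>
      hs (s.orderEmbOfFin_mem rfl a) (s.orderEmbOfFin_mem rfl b)
        ((s.orderEmbOfFin rfl).strictMono hab)
  · intro hπ k f hf hπf
    have hinc : StrictMonoOn π (Finset.univ.image f : Finset (Fin n)) := by
      simpa [StrictMonoOn, hf.lt_iff_lt] using fun a b hab => hπf hab
    simpa [Finset.card_image_of_injective _ hf.injective] using hπ _ hinc

theorem lisLE_iff_height_permShape_le [IsModularLattice L] (hh : IsIncreasingHeight Φ h) {l : ℕ} :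
    lisLE π l ↔ h (permShape Φ π) ≤ l := by
  have hbox : increasingSets π (Fin.last n) (Fin.last n) =
      {s : Finset (Fin n) | StrictMonoOn π s} := by
    simp [increasingSets, Fin.castSucc_lt_last]
  have hgreatest := (isGrowthDiagram_permDiagram Φ π).isGreatest_card_increasingSets hh
    (Fin.last n) (Fin.last n)
  rw [lisLE_iff_forall_card_le, permShape, isLUB_le_iff hgreatest.isLUB, hbox]
  simp [upperBounds]

end IncreasingSubsequences

section YoungLattice

open YoungDiagram

variable {μ κ : YoungDiagram} {i : ℕ}

/-- The sequence of row lengths, embedding Young's lattice into the product order. -/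
def rowLenEmbedding : YoungDiagram ↪o (ℕ → ℕ) :=
  OrderEmbedding.ofMapLEIff rowLen fun μ κ => by
    refine ⟨fun h c hc => ?_, fun h i => le_of_forall_lt fun j hj => ?_⟩
    · exact mem_iff_lt_rowLen.2 ((mem_iff_lt_rowLen.1 hc).trans_le (h c.1))
    · exact mem_iff_lt_rowLen.1 (h (mem_iff_lt_rowLen.2 hj))

theorem rowLen_le_rowLen_iff : μ.rowLen ≤ κ.rowLen ↔ μ ≤ κ :=
  rowLenEmbedding.le_iff_le

theorem rowLen_inj : μ.rowLen = κ.rowLen ↔ μ = κ :=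
  rowLenEmbedding.injective.eq_iff

theorem rowLen_antitone (μ : YoungDiagram) : Antitone μ.rowLen :=
  μ.rowLen_anti

theorem exists_rowLen_eq_zero (μ : YoungDiagram) : ∃ i, μ.rowLen i = 0 := by
  obtain ⟨i, hi⟩ := μ.exists_notMem_col 0
  exact ⟨i, by simpa [mem_iff_lt_rowLen] using hi⟩

theorem rowLen_bot : (⊥ : YoungDiagram).rowLen = 0 :=
  funext fun i => by simpa [mem_iff_lt_rowLen] using notMem_bot (i, 0)

theorem rowLen_sup (μ κ : YoungDiagram) (i : ℕ) :
    (μ ⊔ κ).rowLen i = max (μ.rowLen i) (κ.rowLen i) :=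
  eq_of_forall_lt_iff fun j => by simp [← mem_iff_lt_rowLen]

theorem exists_rowLen_eq {r : ℕ → ℕ} (hr : Antitone r) (h0 : ∃ i, r i = 0) :
    ∃ μ : YoungDiagram, μ.rowLen = r := by
  obtain ⟨n, hn⟩ := h0
  let μ : YoungDiagram :=
    { cells := (Finset.range n ×ˢ Finset.range (r 0)).filter fun c => c.2 < r c.1
      isLowerSet := by
        rintro ⟨i, j⟩ ⟨i', j'⟩ ⟨hi, hj⟩ hc
        have := hr hi
        simp only [Finset.coe_filter, Finset.mem_product, Finset.mem_range, Set.mem_ofPred_eq] at *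
        omega }
  refine ⟨μ, funext fun i => eq_of_forall_lt_iff fun j => ?_⟩
  suffices j < r i → i < n ∧ j < r 0 by
    simpa [← mem_iff_lt_rowLen, ← mem_cells, μ] using this
  intro hj
  exact ⟨lt_of_not_ge fun hi => by have := hr hi; omega, hj.trans_le (hr i.zero_le)⟩

/-- The rows of a Young diagram to which a cell can be added. -/
def addableRows (μ : YoungDiagram) : Set ℕ :=
  {i | ∀ k < i, μ.rowLen i < μ.rowLen k}

/-- The rows of a Young diagram from which a cell can be removed. -/
def removableRows (μ : YoungDiagram) : Set ℕ :=
  {i | μ.rowLen (i + 1) < μ.rowLen i}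

theorem succ_mem_addableRows_iff : i + 1 ∈ addableRows μ ↔ i ∈ removableRows μ := by
  refine ⟨fun h => h i i.lt_succ_self, fun h k hk => ?_⟩
  exact lt_of_lt_of_le h (rowLen_antitone μ (Nat.lt_succ_iff.1 hk))

theorem exists_rowLen_add_single (hi : i ∈ addableRows μ) :
    ∃ κ : YoungDiagram, κ.rowLen = μ.rowLen + Pi.single i 1 := by
  refine exists_rowLen_eq (antitone_nat_of_succ_le fun k => ?_) ?_
  · have hanti := rowLen_antitone μ k.le_succ
    obtain rfl | hk := eq_or_ne i (k + 1)
    · simpa using hi k k.lt_succ_self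
    · simpa [Pi.single_eq_of_ne hk.symm] using hanti.trans (Nat.le_add_right _ _)
  · obtain ⟨n, hn⟩ := exists_rowLen_eq_zero μ
    refine ⟨max n (i + 1), ?_⟩
    have := rowLen_antitone μ (le_max_left n (i + 1))
    have hne : max n (i + 1) ≠ i := by omega
    simp only [Pi.add_apply, Pi.single_eq_of_ne hne]
    omega

theorem exists_rowLen_sub_single (hi : i ∈ removableRows κ) :
    ∃ μ : YoungDiagram, κ.rowLen = μ.rowLen + Pi.single i 1 := by
  have hsub : Antitone (κ.rowLen - Pi.single i 1) := by
    refine antitone_nat_of_succ_le fun k => ?_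
    have hanti : κ.rowLen (k + 1) ≤ κ.rowLen k := rowLen_antitone κ k.le_succ
    have hlt : κ.rowLen (i + 1) < κ.rowLen i := hi
    simp only [Pi.sub_apply, Pi.single_apply]
    split_ifs with hk' hk <;> subst_vars <;> omega
  obtain ⟨n, hn⟩ := exists_rowLen_eq_zero κ
  obtain ⟨μ, hμ⟩ := exists_rowLen_eq hsub ⟨n, by simp [hn]⟩
  have hpos : Pi.single i 1 ≤ κ.rowLen := fun k => by
    obtain rfl | hk := eq_or_ne k i
    · simpa using Nat.one_le_of_lt hi
    · simp [hk]
  exact ⟨μ, by rw [hμ, tsub_add_cancel_of_le hpos]⟩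

theorem mem_addableRows_of_rowLen_eq (h : κ.rowLen = μ.rowLen + Pi.single i 1) :
    i ∈ addableRows μ := by
  intro k hk
  have := rowLen_antitone κ hk.le
  simp only [h, Pi.add_apply, Pi.single_eq_same, Pi.single_eq_of_ne hk.ne] at this
  omega

theorem mem_removableRows_of_rowLen_eq (h : κ.rowLen = μ.rowLen + Pi.single i 1) :
    i ∈ removableRows κ := by
  change κ.rowLen (i + 1) < κ.rowLen i
  have := rowLen_antitone μ (Nat.le_add_right i 1)
  simp only [h, Pi.add_apply, Pi.single_eq_same, Pi.single_eq_of_ne i.succ_ne_self]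
  omega

theorem covBy_of_rowLen_eq (h : κ.rowLen = μ.rowLen + Pi.single i 1) : μ ⋖ κ := by
  refine CovBy.of_image rowLenEmbedding (Pi.covBy_iff.2 ⟨i, ?_, fun k hk => ?_⟩)
  · simp [rowLenEmbedding, h]
  · simp [rowLenEmbedding, h, hk]

theorem covBy_iff_exists_rowLen_eq : μ ⋖ κ ↔ ∃ i, κ.rowLen = μ.rowLen + Pi.single i 1 := by
  refine ⟨fun h => ?_, fun ⟨_, h⟩ => covBy_of_rowLen_eq h⟩
  have hle := rowLen_le_rowLen_iff.2 h.le
  have hlt : ∃ i, μ.rowLen i < κ.rowLen i := by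
    by_contra! hge
    exact h.lt.not_ge (rowLen_le_rowLen_iff.1 hge)
  classical
  set i := Nat.find hlt with hi
  have hadd : i ∈ addableRows μ := fun k hk =>
    (Nat.find_spec hlt).trans_le
      ((rowLen_antitone κ hk.le).trans (not_lt.1 (Nat.find_min hlt hk)))
  obtain ⟨ν, hν⟩ := exists_rowLen_add_single hadd
  have hνκ : ν ≤ κ := rowLen_le_rowLen_iff.1 fun k => by
    obtain rfl | hk := eq_or_ne k i
    · simpa [hν] using Nat.find_spec hlt
    · simpa [hν, hk] using hle k
  obtain rfl : ν = κ := (h.eq_or_eq (covBy_of_rowLen_eq hν).le hνκ).resolve_left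
    (covBy_of_rowLen_eq hν).ne'
  exact ⟨i, hν⟩

section Correspondence

theorem eq_of_single_one_eq {ι : Type*} [DecidableEq ι] {i j : ι}
    (h : (Pi.single i 1 : ι → ℕ) = Pi.single j 1) : i = j := by
  by_contra hne
  simpa [hne] using congrFun h i

/-- The row in which a Young diagram differs from one that it covers. -/
def coverRow (h : μ ⋖ κ) : ℕ :=
  (covBy_iff_exists_rowLen_eq.1 h).choose

theorem rowLen_eq_add_single_coverRow (h : μ ⋖ κ) :
    κ.rowLen = μ.rowLen + Pi.single (coverRow h) 1 :=
  (covBy_iff_exists_rowLen_eq.1 h).choose_spec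

theorem coverRow_eq (h : μ ⋖ κ) (hi : κ.rowLen = μ.rowLen + Pi.single i 1) : coverRow h = i :=
  eq_of_single_one_eq (add_left_cancel ((rowLen_eq_add_single_coverRow h).symm.trans hi))

/-- The lower covers of a Young diagram are obtained by removing a cell from a row. -/
def lowerCoverEquiv (κ : YoungDiagram) : {μ // μ ⋖ κ} ≃ removableRows κ :=
  .ofBijective (fun μ => ⟨coverRow μ.2, mem_removableRows_of_rowLen_eq
    (rowLen_eq_add_single_coverRow μ.2)⟩) <| by
    constructor
    · rintro ⟨μ, hμ⟩ ⟨ν, hν⟩ h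
      have hrow : coverRow hμ = coverRow hν := congrArg Subtype.val h
      have hlen := (rowLen_eq_add_single_coverRow hμ).symm.trans (rowLen_eq_add_single_coverRow hν)
      rw [hrow, add_left_inj, rowLen_inj] at hlen
      exact Subtype.ext hlen
    · rintro ⟨i, hi⟩
      obtain ⟨μ, hμ⟩ := exists_rowLen_sub_single hi
      have hcov := covBy_of_rowLen_eq hμ
      exact ⟨⟨μ, hcov⟩, Subtype.ext (coverRow_eq hcov hμ)⟩

/-- The upper covers of a Young diagram are obtained by adding a cell to a row. -/
def upperCoverEquiv (μ : YoungDiagram) : {κ // μ ⋖ κ} ≃ addableRows μ :=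
  .ofBijective (fun κ => ⟨coverRow κ.2, mem_addableRows_of_rowLen_eq
    (rowLen_eq_add_single_coverRow κ.2)⟩) <| by
    constructor
    · rintro ⟨κ, hκ⟩ ⟨ν, hν⟩ h
      have hrow : coverRow hκ = coverRow hν := congrArg Subtype.val h
      refine Subtype.ext (rowLen_inj.1 ?_)
      rw [rowLen_eq_add_single_coverRow hκ, rowLen_eq_add_single_coverRow hν, hrow]
    · rintro ⟨i, hi⟩
      obtain ⟨κ, hκ⟩ := exists_rowLen_add_single hi
      have hcov := covBy_of_rowLen_eq hκ
      exact ⟨⟨κ, hcov⟩, Subtype.ext (coverRow_eq hcov hκ)⟩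

/-- A cell can always be added to row `0`, and to row `i + 1` precisely when one can be removed
from row `i`. -/
def optionRemovableRowsEquiv (μ : YoungDiagram) : Option (removableRows μ) ≃ addableRows μ :=
  .ofBijective
    (fun o => o.elim ⟨0, by simp [addableRows]⟩
      fun i => ⟨i + 1, succ_mem_addableRows_iff.2 i.2⟩) <| by
    constructor
    · rintro (_ | i) (_ | k) h <;> simp_all [Subtype.ext_iff]
    · rintro ⟨_ | i, hi⟩
      · exact ⟨none, rfl⟩
      · exact ⟨some ⟨i, succ_mem_addableRows_iff.1 hi⟩, rfl⟩

@[simp]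
theorem optionRemovableRowsEquiv_none (μ : YoungDiagram) :
    (optionRemovableRowsEquiv μ none : ℕ) = 0 :=
  rfl

@[simp]
theorem optionRemovableRowsEquiv_some (i : removableRows μ) :
    (optionRemovableRowsEquiv μ (some i) : ℕ) = i + 1 :=
  rfl

/-- The correspondence of row insertion: the cell bumped out of row `i` is added to row `i + 1`. -/
def rowCorrespondence : CoverCorrespondence YoungDiagram := fun μ =>
  (Equiv.optionCongr (lowerCoverEquiv μ)).trans
    ((optionRemovableRowsEquiv μ).trans (upperCoverEquiv μ).symm)

theorem rowLen_upperCoverEquiv_symm (i : addableRows μ) :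
    ((upperCoverEquiv μ).symm i : YoungDiagram).rowLen = μ.rowLen + Pi.single (i : ℕ) 1 := by
  obtain ⟨κ, rfl⟩ := (upperCoverEquiv μ).surjective i
  rw [Equiv.symm_apply_apply]
  exact rowLen_eq_add_single_coverRow κ.2

theorem isIncreasingHeight_rowLen_zero :
    IsIncreasingHeight rowCorrespondence fun μ => μ.rowLen 0 where
  map_bot := congrFun rowLen_bot 0
  map_sup μ κ := rowLen_sup μ κ 0
  map_mark μ := by
    simp [rowCorrespondence, rowLen_upperCoverEquiv_symm]
  map_bump μ ρ := by
    simp [rowCorrespondence, rowLen_upperCoverEquiv_symm]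

end Correspondence

end YoungLattice

section BetaNumbers

open YoungDiagram

variable {l : ℕ} {μ κ : YoungDiagram}

theorem colLen_eq_zero_iff {j : ℕ} : μ.colLen j = 0 ↔ μ.rowLen 0 ≤ j := by
  rw [← not_lt, ← mem_iff_lt_rowLen, mem_iff_lt_colLen, Nat.pos_iff_ne_zero, not_not]

theorem colLen_inj : μ.colLen = κ.colLen ↔ μ = κ := by
  rw [← transpose_eq_iff, ← rowLen_inj]
  simp only [funext_iff, rowLen_transpose]

theorem covBy_iff_exists_colLen_eq : μ ⋖ κ ↔ ∃ j, κ.colLen = μ.colLen + Pi.single j 1 := by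
  rw [← apply_covBy_apply_iff transposeOrderIso, covBy_iff_exists_rowLen_eq]
  simp only [transposeOrderIso_apply, funext_iff, Pi.add_apply, rowLen_transpose]

/-- The beta numbers of a partition with at most `l` columns: the column lengths in increasing
order, made distinct by adding `0, 1, …, l - 1`. -/
def betaNumber (l : ℕ) (μ : YoungDiagram) (i : Fin l) : ℕ :=
  μ.colLen i.rev + i

theorem betaNumber_strictMono (l : ℕ) (μ : YoungDiagram) : StrictMono (betaNumber l μ) :=
  fun _ _ h => add_lt_add_of_le_of_lt (μ.colLen_anti _ _ (Fin.rev_le_rev.2 h.le)) h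

theorem betaNumber_bot (l : ℕ) : betaNumber l ⊥ = fun i : Fin l => (i : ℕ) := by
  funext i
  have : (⊥ : YoungDiagram).colLen i.rev = 0 := colLen_eq_zero_iff.2 (by simp [rowLen_bot])
  rw [betaNumber, this, zero_add]

theorem betaNumber_inj (hμ : μ.rowLen 0 ≤ l) (hκ : κ.rowLen 0 ≤ l) :
    betaNumber l μ = betaNumber l κ ↔ μ = κ := by
  refine ⟨fun h => colLen_inj.1 (funext fun j => ?_), fun h => h ▸ rfl⟩
  obtain hj | hj := lt_or_ge j l
  · simpa [betaNumber] using congrFun h (Fin.rev ⟨j, hj⟩)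
  · rw [colLen_eq_zero_iff.2 (hμ.trans hj), colLen_eq_zero_iff.2 (hκ.trans hj)]

theorem val_le_of_strictMono {f : Fin l → ℕ} (hf : StrictMono f) (i : Fin l) : (i : ℕ) ≤ f i := by
  obtain ⟨i, hi⟩ := i
  induction i with
  | zero => exact Nat.zero_le _
  | succ i ih => exact (ih (by omega)).trans_lt (hf (Fin.mk_lt_mk.2 i.lt_succ_self))

theorem exists_betaNumber_eq {f : Fin l → ℕ} (hf : StrictMono f) :
    ∃ μ : YoungDiagram, μ.rowLen 0 ≤ l ∧ betaNumber l μ = f := by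
  let c (j : ℕ) : ℕ := if hj : j < l then f (Fin.rev ⟨j, hj⟩) - Fin.rev ⟨j, hj⟩ else 0
  have hc : Antitone c := antitone_nat_of_succ_le fun j => by
    by_cases hj : j + 1 < l
    · have hj' : j < l := by omega
      have hlt : f (Fin.rev ⟨j + 1, hj⟩) < f (Fin.rev ⟨j, hj'⟩) :=
        hf (Fin.rev_lt_rev.2 (Fin.mk_lt_mk.2 j.lt_succ_self))
      simp only [c, hj, hj', dite_true, Fin.val_rev]
      omega
    · simp [c, hj]
  obtain ⟨μ, hμ⟩ := exists_rowLen_eq hc ⟨l, by simp [c]⟩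
  have hcol (j : ℕ) : μ.transpose.colLen j = c j := by rw [colLen_transpose, hμ]
  refine ⟨μ.transpose, colLen_eq_zero_iff.1 (by simp [hcol, c]), funext fun i => ?_⟩
  simp only [betaNumber, hcol, c, i.rev.is_lt, dite_true, Fin.eta, Fin.rev_rev]
  exact Nat.sub_add_cancel (val_le_of_strictMono hf i)

theorem betaNumber_eq_add_single_iff {i : Fin l} (hμ : μ.rowLen 0 ≤ l) (hκ : κ.rowLen 0 ≤ l) :
    betaNumber l κ = betaNumber l μ + Pi.single i 1 ↔
      κ.colLen = μ.colLen + Pi.single (i.rev : ℕ) 1 := by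
  have hrev (j : Fin l) : (Pi.single (i.rev : ℕ) 1 : ℕ → ℕ) j.rev =
        (Pi.single i 1 : Fin l → ℕ) j := by
    simp only [Pi.single_apply, Fin.val_inj, Fin.rev_inj]
  constructor
  · refine fun h => funext fun j => ?_
    obtain hj | hj := lt_or_ge j l
    · have := congrFun h (Fin.rev ⟨j, hj⟩)
      rw [Pi.add_apply, ← hrev] at this
      simp only [betaNumber, Fin.rev_rev, Fin.val_rev, Pi.add_apply] at this ⊢
      omega
    · have hne : j ≠ i.rev := by omega
      rw [Pi.add_apply, Pi.single_eq_of_ne hne, colLen_eq_zero_iff.2 (hμ.trans hj),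
        colLen_eq_zero_iff.2 (hκ.trans hj), add_zero]
  · refine fun h => funext fun j => ?_
    rw [Pi.add_apply, ← hrev, betaNumber, h, Pi.add_apply, betaNumber, add_right_comm]

theorem covBy_of_betaNumber_eq {i : Fin l} (hμ : μ.rowLen 0 ≤ l) (hκ : κ.rowLen 0 ≤ l)
    (h : betaNumber l κ = betaNumber l μ + Pi.single i 1) : μ ⋖ κ :=
  covBy_iff_exists_colLen_eq.2 ⟨i.rev, (betaNumber_eq_add_single_iff hμ hκ).1 h⟩

theorem exists_betaNumber_eq_add_single (hκ : κ.rowLen 0 ≤ l) (h : μ ⋖ κ) :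
    ∃ i, betaNumber l κ = betaNumber l μ + Pi.single i 1 := by
  have hμ : μ.rowLen 0 ≤ l := (rowLen_le_rowLen_iff.2 h.le 0).trans hκ
  obtain ⟨j, hj⟩ := covBy_iff_exists_colLen_eq.1 h
  have hjl : j < l := by
    by_contra! hlj
    have := congrFun hj j
    simp [colLen_eq_zero_iff.2 (hκ.trans hlj)] at this
  refine ⟨Fin.rev ⟨j, hjl⟩, (betaNumber_eq_add_single_iff hμ hκ).2 ?_⟩
  rwa [Fin.rev_rev]

end BetaNumbers

section DividedPowers

variable {K : Type*} [Field K] {l : ℕ} {t : K} {f : Fin l → ℤ}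

/-- The divided power `t ^ a / a!`, read as `0` for negative `a`. -/
def divPow (t : K) (a : ℤ) : K :=
  if 0 ≤ a then t ^ a.toNat / a.toNat.factorial else 0

theorem divPow_of_neg (t : K) {a : ℤ} (ha : a < 0) : divPow t a = 0 :=
  if_neg ha.not_ge

theorem divPow_natCast (t : K) (n : ℕ) : divPow t n = t ^ n / n.factorial := by
  simp [divPow]

theorem mul_divPow_sub_one [CharZero K] (t : K) (a : ℤ) :
    t * divPow t (a - 1) = a * divPow t a := by
  obtain ha | rfl | ha := lt_trichotomy a 0
  · rw [divPow_of_neg t ha, divPow_of_neg t (by omega), mul_zero, mul_zero]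
  · rw [divPow_of_neg t (by omega), Int.cast_zero, mul_zero, zero_mul]
  · obtain ⟨n, rfl⟩ : ∃ n : ℕ, a = (n + 1 : ℕ) := ⟨(a - 1).toNat, by omega⟩
    rw [Nat.cast_succ, add_sub_cancel_right, ← Nat.cast_succ, divPow_natCast, divPow_natCast,
      Nat.factorial_succ, pow_succ]
    have := n.factorial_ne_zero
    push_cast
    field_simp

/-- The determinant `det (t ^ (f i - j) / (f i - j)!)`. By Aitken's formula, when `f` lists the
beta numbers of a partition of `n`, it equals `t ^ n / n!` times the number of standard tableaux. -/
def divPowDet (t : K) (f : Fin l → ℤ) : K :=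
  Matrix.det (Matrix.of fun i j : Fin l => divPow t (f i - (j : ℕ)))

theorem mul_sum_divPowDet_sub_single [CharZero K] (t : K) (f : Fin l → ℤ) :
    t * ∑ i, divPowDet t (f - Pi.single i 1) =
      ((∑ i, (f i - (i : ℕ)) : ℤ) : K) * divPowDet t f := by
  simp only [divPowDet, ← Matrix.det_transpose (Matrix.of _), Matrix.det_apply', Finset.mul_sum]
  rw [Finset.sum_comm]
  refine Finset.sum_congr rfl fun σ _ => ?_
  have hsum : ∑ i, (f i - (i : ℕ)) = ∑ i, (f i - (σ i : ℕ)) := by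
    rw [Finset.sum_sub_distrib, Finset.sum_sub_distrib, Equiv.sum_comp σ fun i => ((i : ℕ) : ℤ)]
  rw [hsum, Int.cast_sum, Finset.sum_mul]
  refine Finset.sum_congr rfl fun i _ => ?_
  simp only [Matrix.transpose_apply, Matrix.of_apply]
  rw [← Finset.mul_prod_erase _ _ (Finset.mem_univ i),
    ← Finset.mul_prod_erase _ (fun k => divPow t (f k - (σ k : ℕ))) (Finset.mem_univ i)]
  have hprod :
      ∏ k ∈ Finset.univ.erase i, divPow t ((f - Pi.single i 1 : Fin l → ℤ) k - (σ k : ℕ)) =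
        ∏ k ∈ Finset.univ.erase i, divPow t (f k - (σ k : ℕ)) :=
    Finset.prod_congr rfl fun k hk => by simp [Finset.ne_of_mem_erase hk]
  rw [hprod, Pi.sub_apply, Pi.single_eq_same, sub_right_comm, mul_left_comm, ← mul_assoc t,
    mul_divPow_sub_one, mul_assoc, mul_left_comm]

theorem injective_of_divPowDet_ne_zero (h : divPowDet t f ≠ 0) : Function.Injective f := by
  intro i j hij
  by_contra hne
  exact h (Matrix.det_zero_of_row_eq hne (funext fun k => by simp [hij]))

theorem nonneg_of_divPowDet_ne_zero (h : divPowDet t f ≠ 0) (i : Fin l) : 0 ≤ f i := by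
  by_contra! hi
  exact h (Matrix.det_eq_zero_of_row_eq_zero i fun j => divPow_of_neg t (by omega))

theorem divPowDet_val (l : ℕ) (t : K) : divPowDet t (fun i : Fin l => ((i : ℕ) : ℤ)) = 1 := by
  rw [divPowDet, Matrix.det_of_isLowerTriangular]
  · simp [divPow]
  · intro i j hij
    refine divPow_of_neg t ?_
    have : (i : ℕ) < j := hij
    omega

end DividedPowers

section CountingTableaux

variable {K : Type*} [Field K] {l : ℕ} {κ : YoungDiagram}

theorem finite_lowerCovers (κ : YoungDiagram) : Finite {μ // μ ⋖ κ} :=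
  .of_injective (fun μ => (⟨μ.1.cells, Finset.mem_powerset.2 μ.2.le⟩ : κ.cells.powerset))
    fun _ _ h => Subtype.ext (YoungDiagram.ext (congrArg Subtype.val h))

theorem sum_betaNumber (l : ℕ) (κ : YoungDiagram) :
    ∑ i, betaNumber l κ i = ∑ i : Fin l, κ.colLen i + ∑ i : Fin l, (i : ℕ) := by
  simp only [betaNumber, Finset.sum_add_distrib, add_left_inj]
  exact Equiv.sum_comp Fin.revPerm fun i : Fin l => κ.colLen i

theorem natCast_sub_single_eq_iff {ι : Type*} [DecidableEq ι] {f g : ι → ℕ} {i : ι} :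
    (fun k => (f k : ℤ)) - Pi.single i 1 = (fun k => (g k : ℤ)) ↔ f = g + Pi.single i 1 := by
  simp only [sub_eq_iff_eq_add, funext_iff, Pi.add_apply, Pi.single_apply]
  exact forall_congr' fun k => by split_ifs <;> norm_cast

/-- A tuple `betaNumber l κ - Pi.single i 1` that does not come from a diagram has a negative or a
repeated entry, so its determinant vanishes. -/
theorem exists_betaNumber_eq_of_divPowDet_ne_zero {t : K} {i : Fin l} (hκ : κ.rowLen 0 ≤ l)
    (h : divPowDet t ((fun k => (betaNumber l κ k : ℤ)) - Pi.single i 1) ≠ 0) :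
    ∃ μ, μ ⋖ κ ∧ betaNumber l κ = betaNumber l μ + Pi.single i 1 := by
  have hinj := injective_of_divPowDet_ne_zero h
  obtain ⟨g, hg⟩ : ∃ g : Fin l → ℕ, (fun k => (betaNumber l κ k : ℤ)) - Pi.single i 1 =
      fun k => (g k : ℤ) :=
    ⟨_, funext fun k => (Int.toNat_of_nonneg (nonneg_of_divPowDet_ne_zero h k)).symm⟩
  have hadd := natCast_sub_single_eq_iff.1 hg
  have hmono : StrictMono g := by
    intro a b hab
    have hlt := betaNumber_strictMono l κ hab
    have hne : g a ≠ g b := fun hgab => hab.ne (hinj (by simp only [hg, hgab]))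
    simp only [hadd, Pi.add_apply, Pi.single_apply] at hlt
    split_ifs at hlt <;> omega
  obtain ⟨μ, hμ, rfl⟩ := exists_betaNumber_eq hmono
  exact ⟨μ, covBy_of_betaNumber_eq hμ hκ hadd, hadd⟩

theorem mul_sum_divPowDet_covBy [CharZero K] [Fintype {μ // μ ⋖ κ}] (hκ : κ.rowLen 0 ≤ l)
    (t : K) :
    t * ∑ μ : {μ // μ ⋖ κ}, divPowDet t (fun i => (betaNumber l μ i : ℤ)) =
      ((∑ i : Fin l, κ.colLen i : ℕ) : K) * divPowDet t fun i => (betaNumber l κ i : ℤ) := by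
  choose row hrow using fun μ : {μ // μ ⋖ κ} => exists_betaNumber_eq_add_single hκ μ.2
  have hrow_inj : row.Injective := by
    intro μ ν h
    have hsum := (hrow μ).symm.trans (hrow ν)
    have hμ := (rowLen_le_rowLen_iff.2 μ.2.le 0).trans hκ
    have hν := (rowLen_le_rowLen_iff.2 ν.2.le 0).trans hκ
    rw [h, add_left_inj, betaNumber_inj hμ hν] at hsum
    exact Subtype.ext hsum
  have hweight : ((∑ i : Fin l, κ.colLen i : ℕ) : K) =
      ((∑ i, ((betaNumber l κ i : ℤ) - (i : ℕ)) : ℤ) : K) := by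
    rw [Finset.sum_sub_distrib, ← Nat.cast_sum, sum_betaNumber]
    push_cast
    ring
  rw [hweight, ← mul_sum_divPowDet_sub_single]
  congr 1
  refine Fintype.sum_of_injective row hrow_inj _ _ (fun i hi => ?_) fun μ => ?_
  · by_contra h
    obtain ⟨μ, hμ, hadd⟩ := exists_betaNumber_eq_of_divPowDet_ne_zero hκ h
    exact hi ⟨⟨μ, hμ⟩, eq_of_single_one_eq (add_left_cancel ((hrow ⟨μ, hμ⟩).symm.trans hadd))⟩
  · rw [natCast_sub_single_eq_iff.2 (hrow μ)]

theorem sum_colLen_eq_zero_iff (hκ : κ.rowLen 0 ≤ l) :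
    ∑ i : Fin l, κ.colLen i = 0 ↔ κ = ⊥ := by
  have hbot : (⊥ : YoungDiagram).rowLen 0 ≤ l := by simp [rowLen_bot]
  rw [← betaNumber_inj hκ hbot, Finset.sum_eq_zero_iff, betaNumber_bot, funext_iff,
    ← Fin.revPerm.forall_congr_right]
  simp [betaNumber]

theorem sum_colLen_of_covBy {μ : YoungDiagram} (hκ : κ.rowLen 0 ≤ l) (h : μ ⋖ κ) :
    ∑ i : Fin l, κ.colLen i = ∑ i : Fin l, μ.colLen i + 1 := by
  obtain ⟨j, hj⟩ := exists_betaNumber_eq_add_single hκ h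
  have hsum := sum_betaNumber l κ
  simp only [hj, Pi.add_apply, Finset.sum_add_distrib, sum_betaNumber, Finset.sum_pi_single',
    Finset.mem_univ, if_true] at hsum
  omega

theorem card_saturatedChain_mul_pow [CharZero K] (hκ : κ.rowLen 0 ≤ l) (t : K) (n : ℕ) :
    (Nat.card (SaturatedChain n κ) : K) * t ^ n =
      if n = ∑ i : Fin l, κ.colLen i then
        n.factorial * divPowDet t fun i => (betaNumber l κ i : ℤ)
      else 0 := by
  induction n generalizing κ with
  | zero =>
    split_ifs with h
    · obtain rfl := (sum_colLen_eq_zero_iff hκ).1 h.symm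
      simp [betaNumber_bot, divPowDet_val]
    · have := SaturatedChain.isEmpty_zero (mt (sum_colLen_eq_zero_iff hκ).2 (Ne.symm h))
      simp
  | succ n ih =>
    have := finite_lowerCovers κ
    have := Fintype.ofFinite {μ // μ ⋖ κ}
    have hterm (μ : {μ // μ ⋖ κ}) : (Nat.card (SaturatedChain n μ.1) : K) * t ^ n =
        if n + 1 = ∑ i : Fin l, κ.colLen i then
          n.factorial * divPowDet t fun i => (betaNumber l μ i : ℤ)
        else 0 := by
      rw [ih ((rowLen_le_rowLen_iff.2 μ.2.le 0).trans hκ), sum_colLen_of_covBy hκ μ.2]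
      simp only [add_left_inj]
    rw [SaturatedChain.card_succ finite_lowerCovers, pow_succ, ← mul_assoc, Nat.cast_sum,
      Finset.sum_mul, Finset.sum_congr rfl fun μ _ => hterm μ]
    split_ifs with h
    · rw [← Finset.mul_sum, mul_assoc, mul_comm _ t, mul_sum_divPowDet_covBy hκ, ← h,
        Nat.factorial_succ]
      push_cast
      ring
    · simp

end CountingTableaux

section CauchyBinet

variable {l : ℕ} {α : Type*} [LinearOrder α]

theorem orderEmbedding_comp_perm_bijective (l : ℕ) (α : Type*) [LinearOrder α] :
    Function.Bijective fun p : (Fin l ↪o α) × Equiv.Perm (Fin l) =>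
      p.2.toEmbedding.trans p.1.toEmbedding := by
  constructor
  · rintro ⟨f, σ⟩ ⟨g, τ⟩ h
    have hfun (i : Fin l) : f (σ i) = g (τ i) := DFunLike.congr_fun h i
    have hrange : Set.range f = Set.range g := by
      rw [← σ.surjective.range_comp f, ← τ.surjective.range_comp g]
      exact congrArg Set.range (funext hfun)
    obtain rfl : f = g := DFunLike.coe_injective (f.strictMono.range_inj g.strictMono |>.1 hrange)
    exact Prod.ext rfl (Equiv.ext fun i => f.injective (hfun i))
  · intro f
    have hmono : StrictMono (f ∘ Tuple.sort f) :=
      (Tuple.monotone_sort f).strictMono_of_injective (f.injective.comp (Equiv.injective _))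
    exact ⟨(.ofStrictMono _ hmono, (Tuple.sort f).symm), by ext; simp⟩

theorem det_mul_eq_sum_det_mul_det_submatrix {R : Type*} [CommRing R] [Fintype α]
    (A : Matrix (Fin l) α R) (B : Matrix α (Fin l) R) :
    (A * B).det = ∑ f : Fin l ↪o α, (A.submatrix id f).det * (B.submatrix f id).det := by
  classical
  have hexpand : (A * B).det = ∑ f : Fin l → α, (∏ i, A i (f i)) * (B.submatrix f id).det := by
    have hrows : A * B = fun i => ∑ m, A i m • B m := by
      ext i j
      simp [Matrix.mul_apply]
    rw [hrows]
    refine (Matrix.detRowAlternating.toMultilinearMap.map_sum fun i m => A i m • B m).trans ?_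
    exact Finset.sum_congr rfl fun f _ => MultilinearMap.map_smul_univ _ _ _
  have hembed : (A * B).det = ∑ f : Fin l ↪ α, (∏ i, A i (f i)) * (B.submatrix f id).det := by
    rw [hexpand]
    symm
    refine Fintype.sum_of_injective _ DFunLike.coe_injective _ _ (fun f hf => ?_) fun _ => rfl
    obtain ⟨i, j, hij, hne⟩ := Function.not_injective_iff.1 fun hinj => hf ⟨⟨f, hinj⟩, rfl⟩
    rw [Matrix.det_zero_of_row_eq hne (funext fun k => by simp [hij]), mul_zero]
  rw [hembed, ← (orderEmbedding_comp_perm_bijective l α).sum_comp, Fintype.sum_prod_type]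
  refine Finset.sum_congr rfl fun f _ => ?_
  have hperm (σ : Equiv.Perm (Fin l)) :
      (B.submatrix (f ∘ σ) id).det = σ.sign * (B.submatrix f id).det :=
    Matrix.det_permute σ (B.submatrix f id)
  rw [← Matrix.det_transpose, Matrix.det_apply', Finset.sum_mul]
  refine Finset.sum_congr rfl fun σ _ => ?_
  refine (congrArg _ (hperm σ)).trans ?_
  simp only [Matrix.transpose_apply, Matrix.submatrix_apply]
  exact (mul_left_comm _ _ _).trans (mul_assoc _ _ _).symm

/-- The increasing tuples with entries in a finite set. -/
def orderEmbeddingsInto (l : ℕ) (s : Finset α) : Finset (Fin l ↪o α) :=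
  Finset.univ.map
    ⟨fun f : Fin l ↪o s => f.trans (OrderEmbedding.subtype (· ∈ s)), fun _ _ h =>
      DFunLike.ext _ _ fun i => Subtype.ext (DFunLike.congr_fun h i)⟩

theorem mem_orderEmbeddingsInto {s : Finset α} {f : Fin l ↪o α} :
    f ∈ orderEmbeddingsInto l s ↔ ∀ i, f i ∈ s := by
  simp only [orderEmbeddingsInto, Finset.mem_map, Finset.mem_univ, true_and]
  constructor
  · rintro ⟨g, rfl⟩ i
    exact (g i).2
  · exact fun h => ⟨.ofStrictMono (fun i => ⟨f i, h i⟩) fun _ _ hij => f.strictMono hij, rfl⟩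

theorem orderEmbeddingsInto_mono : Monotone (orderEmbeddingsInto l (α := α)) :=
  fun _ _ hs _ hf => mem_orderEmbeddingsInto.2 fun i => hs (mem_orderEmbeddingsInto.1 hf i)

theorem tendsto_orderEmbeddingsInto :
    Filter.Tendsto (orderEmbeddingsInto l (α := α)) .atTop .atTop := by
  refine Filter.tendsto_atTop_finset_of_monotone orderEmbeddingsInto_mono fun f => ?_
  exact ⟨Finset.univ.map f.toEmbedding, mem_orderEmbeddingsInto.2 fun i =>
    Finset.mem_map_of_mem f.toEmbedding (Finset.mem_univ i)⟩

theorem det_gram_eq_sum_det_submatrix_sq {R : Type*} [CommRing R]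
    (A : Matrix (Fin l) α R) (s : Finset α) :
    Matrix.det (Matrix.of fun j k => ∑ m ∈ s, A j m * A k m) =
      ∑ f ∈ orderEmbeddingsInto l s, (A.submatrix id f).det ^ 2 := by
  let A' : Matrix (Fin l) s R := A.submatrix id (↑)
  have hgram : Matrix.of (fun j k => ∑ m ∈ s, A j m * A k m) = A' * A'.transpose := by
    ext j k
    exact (Finset.sum_coe_sort s fun m => A j m * A k m).symm
  rw [hgram, det_mul_eq_sum_det_mul_det_submatrix, orderEmbeddingsInto, Finset.sum_map]
  refine Finset.sum_congr rfl fun f _ => ?_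
  rw [← Matrix.transpose_submatrix, Matrix.det_transpose, sq]
  rfl

theorem hasSum_det_submatrix_sq {A : Matrix (Fin l) α ℝ} {B : Matrix (Fin l) (Fin l) ℝ}
    (h : ∀ j k, HasSum (fun m => A j m * A k m) (B j k)) :
    HasSum (fun f : Fin l ↪o α => (A.submatrix id f).det ^ 2) B.det := by
  have hlim : Filter.Tendsto (fun s => ∑ f ∈ orderEmbeddingsInto l s, (A.submatrix id f).det ^ 2)
      .atTop (nhds B.det) := by
    simp only [← det_gram_eq_sum_det_submatrix_sq]
    refine ((continuous_id.matrix_det).tendsto B).comp ?_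
    exact tendsto_pi_nhds.2 fun j => tendsto_pi_nhds.2 fun k => h j k
  have hmono : Monotone fun s => ∑ f ∈ orderEmbeddingsInto l s, (A.submatrix id f).det ^ 2 :=
    fun _ _ hs => Finset.sum_le_sum_of_subset_of_nonneg (orderEmbeddingsInto_mono hs)
      fun f _ _ => sq_nonneg _
  have hsummable : Summable fun f : Fin l ↪o α => (A.submatrix id f).det ^ 2 := by
    refine summable_of_sum_le (c := B.det) (fun f => sq_nonneg _) fun u => ?_
    obtain ⟨s, hs⟩ := (tendsto_orderEmbeddingsInto.eventually_ge_atTop u).exists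
    exact (Finset.sum_le_sum_of_subset_of_nonneg hs fun f _ _ => sq_nonneg _).trans
      (hmono.ge_of_tendsto hlim s)
  have hdet := tendsto_nhds_unique (hsummable.hasSum.comp tendsto_orderEmbeddingsInto) hlim
  exact hdet ▸ hsummable.hasSum

end CauchyBinet

section BesselDeterminant

theorem summable_besselI (d : ℕ) (t : ℝ) :
    Summable fun m : ℕ => t ^ (2 * m + d) / ((m.factorial : ℝ) * ((m + d).factorial : ℝ)) := by
  refine Summable.of_norm_bounded ((Real.summable_pow_div_factorial (t ^ 2)).mul_left (|t| ^ d))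
    fun m => ?_
  have hnum : |t ^ (2 * m + d)| = |t| ^ d * (t ^ 2) ^ m := by
    rw [abs_pow, pow_add, pow_mul, sq_abs, mul_comm]
  have hm : (0 : ℝ) < m.factorial := by exact_mod_cast m.factorial_pos
  have hmd : (1 : ℝ) ≤ (m + d).factorial := by exact_mod_cast (m + d).factorial_pos
  rw [norm_div, Real.norm_eq_abs, hnum, ← mul_div_assoc, Real.norm_of_nonneg (by positivity)]
  exact div_le_div_of_nonneg_left (by positivity) hm (le_mul_of_one_le_right hm.le hmd)

theorem hasSum_divPow_mul_of_le (t : ℝ) {j k : ℕ} (h : j ≤ k) :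
    HasSum (fun m : ℕ => divPow t ((m : ℤ) - j) * divPow t ((m : ℤ) - k)) (besselI (j - k) t) := by
  rw [← (add_left_injective k).hasSum_iff]
  · refine (summable_besselI _ t).hasSum.congr_fun fun m => ?_
    have hj : ((m + k : ℕ) : ℤ) - j = (m + ((j : ℤ) - k).natAbs : ℕ) := by omega
    have hk : ((m + k : ℕ) : ℤ) - k = m := by omega
    rw [Function.comp_apply, hj, hk, divPow_natCast, divPow_natCast, div_mul_div_comm, ← pow_add]
    ring
  · intro m hm
    have hmk : m < k := by
      by_contra! hkm
      exact hm ⟨m - k, Nat.sub_add_cancel hkm⟩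
    rw [divPow_of_neg t (a := (m : ℤ) - k) (by omega), mul_zero]

theorem besselI_neg (j : ℤ) (t : ℝ) : besselI (-j) t = besselI j t := by
  simp only [besselI, Int.natAbs_neg]

theorem hasSum_divPow_mul (t : ℝ) (j k : ℕ) :
    HasSum (fun m : ℕ => divPow t ((m : ℤ) - j) * divPow t ((m : ℤ) - k)) (besselI (j - k) t) := by
  obtain h | h := le_total j k
  · exact hasSum_divPow_mul_of_le t h
  · rw [← besselI_neg, neg_sub]
    simpa only [mul_comm] using hasSum_divPow_mul_of_le t h

theorem hasSum_divPowDet_sq (l : ℕ) (t : ℝ) :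
    HasSum (fun f : Fin l ↪o ℕ => divPowDet t (fun i => (f i : ℤ)) ^ 2)
      (Matrix.det (Matrix.of fun j k : Fin l => besselI ((j : ℕ) - (k : ℕ) : ℤ) t)) := by
  refine (hasSum_det_submatrix_sq (A := fun (j : Fin l) (m : ℕ) => divPow t ((m : ℤ) - (j : ℕ)))
    fun j k => hasSum_divPow_mul t j k).congr_fun fun f => ?_
  rw [divPowDet, ← Matrix.det_transpose]
  rfl

end BesselDeterminant

section GeneratingFunction

variable {l : ℕ}

/-- The diagrams with at most `l` columns, identified with the increasing `l`-tuples of natural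
numbers through their beta numbers. -/
def betaNumberEquiv (l : ℕ) : {κ : YoungDiagram // κ.rowLen 0 ≤ l} ≃ (Fin l ↪o ℕ) :=
  .ofBijective (fun κ => .ofStrictMono (betaNumber l κ) (betaNumber_strictMono l κ)) <| by
    constructor
    · exact fun κ ν h => Subtype.ext ((betaNumber_inj κ.2 ν.2).1 (congrArg DFunLike.coe h))
    · intro f
      obtain ⟨κ, hκ, hf⟩ := exists_betaNumber_eq f.strictMono
      exact ⟨⟨κ, hκ⟩, DFunLike.coe_injective hf⟩

theorem hasSum_divPowDet_betaNumber_sq (l : ℕ) (t : ℝ) :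
    HasSum (fun κ : {κ : YoungDiagram // κ.rowLen 0 ≤ l} =>
        divPowDet t (fun i => (betaNumber l κ i : ℤ)) ^ 2)
      (Matrix.det (Matrix.of fun j k : Fin l => besselI ((j : ℕ) - (k : ℕ) : ℤ) t)) := by
  have hsum := (betaNumberEquiv l).hasSum_iff.2 (hasSum_divPowDet_sq l t)
  exact hsum

theorem card_permShape_mul_div {κ : YoungDiagram} (hκ : κ.rowLen 0 ≤ l) (t : ℝ) (n : ℕ) :
    (Nat.card {π : Equiv.Perm (Fin n) // permShape rowCorrespondence π = κ} : ℝ) *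
        (t ^ (2 * n) / (n.factorial * n.factorial)) =
      if n = ∑ i : Fin l, κ.colLen i then
        divPowDet t (fun i => (betaNumber l κ i : ℤ)) ^ 2
      else 0 := by
  calc
    _ = ((Nat.card (SaturatedChain n κ) : ℝ) * t ^ n / n.factorial) ^ 2 := by
      rw [card_permShape_eq]
      push_cast
      ring
    _ = _ := by
      rw [card_saturatedChain_mul_pow hκ]
      split_ifs
      · field_simp
      · simp

theorem hasSum_card_permShape (n l : ℕ) :
    HasSum (fun κ : {κ : YoungDiagram // κ.rowLen 0 ≤ l} =>
      (Nat.card {π : Equiv.Perm (Fin n) // permShape rowCorrespondence π = κ} : ℝ))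
      (permCount n l) := by
  have hlis (π : Equiv.Perm (Fin n)) :=
    lisLE_iff_height_permShape_le isIncreasingHeight_rowLen_zero (π := π) (l := l)
  have hcard {α : Type} [Finite α] : HasSum (fun _ : α => (1 : ℝ)) (Nat.card α) := by
    have := Fintype.ofFinite α
    simpa using hasSum_fintype fun _ : α => (1 : ℝ)
  exact ((Equiv.sigmaSubtypeFiberEquivSubtype _ hlis).hasSum_iff.2 hcard).sigma fun _ => hcard

theorem hasSum_comm_of_nonneg {β γ : Type*} {F : β → γ → ℝ} {g : β → ℝ} {h : γ → ℝ} {a : ℝ}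
    (hF : ∀ b c, 0 ≤ F b c) (hg : ∀ b, HasSum (F b) (g b)) (ha : HasSum g a)
    (hh : ∀ c, HasSum (fun b => F b c) (h c)) : HasSum h a := by
  have hsummable : Summable fun p : β × γ => F p.1 p.2 :=
    (summable_prod_of_nonneg fun p => hF p.1 p.2).2
      ⟨fun b => (hg b).summable, ha.summable.congr fun b => (hg b).tsum_eq.symm⟩
  have htotal : ∑' p : β × γ, F p.1 p.2 = a :=
    (hsummable.hasSum.prod_fiberwise hg).unique ha
  have hswap := (Equiv.prodComm γ β).hasSum_iff.2 (htotal ▸ hsummable.hasSum)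
  exact hswap.prod_fiberwise hh

end GeneratingFunction

/-- `Σ_{n≥0} f_{n,l} · t^{2n}/(n!)² = det_{0≤j,k<l} ( I_{j−k}(2t) )`. -/
theorem permCount_gf_eq_bessel_toeplitz_det (l : ℕ) (t : ℝ) :
    ∑' n : ℕ, (permCount n l : ℝ) * t ^ (2 * n) /
        ((Nat.factorial n : ℝ) * (Nat.factorial n : ℝ)) =
      Matrix.det (Matrix.of fun j k : Fin l =>
        besselI ((j : ℕ) - (k : ℕ) : ℤ) t) := by
  simp only [mul_div_assoc]
  refine (hasSum_comm_of_nonneg (fun κ n => ?_) (fun κ => ?_)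
    (hasSum_divPowDet_betaNumber_sq l t) fun n => (hasSum_card_permShape n l).mul_right _).tsum_eq
  · rw [card_permShape_mul_div κ.2]
    positivity
  · simp only [card_permShape_mul_div κ.2]
    exact hasSum_ite_eq _ _
end
end
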